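/- arXiv:2602.14852 — 4 statements merged into one kernel-verified Lean document; each statement's English description precedes it below -/
import Mathlib

section
/- Let G = (V,E) be a finite connected graph, ν a fully supported positive measure on E, |||·||| a seminorm on ℝ^V with |||1_V||| = 0, and C ∈ [0,∞). If |||1_A||| ≤ C·‖1_A‖_{W^{1,1}(ν)} for every simply connected subset A ⊆ V, then |||f||| ≤ C·‖f‖_{W^{1,1}(ν)} for every function f: V → ℝ. -/
open Finset

/-- The `W^{1,1}(ν)` Sobolev seminorm of `f : V → ℝ` on a graph `G` with edge measure `ν`:
`Σ_{uv ∈ E(G)} |f u − f v| · ν(uv)`. -/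
noncomputable def sobolevW11 {V : Type*} [Fintype V] [DecidableEq V]
    (G : SimpleGraph V) [DecidableRel G.Adj] (ν : Sym2 V → ℝ) (f : V → ℝ) : ℝ :=
  ∑ e ∈ G.edgeFinset,
    (Sym2.lift ⟨fun u v => |f u - f v|, fun u v => abs_sub_comm (f u) (f v)⟩ e) * ν e

/-!
A superlevel set of a nonconstant `f` can be shrunk to one of its components `B`, and then
enlarged to the complement `A` of a component of `Bᶜ`. Both steps only remove boundary edges, and
`A` is simply connected; so `f` still drops strictly along every edge leaving `A`. Subtracting
from `f` the multiple of `1_A` given by the smallest such drop causes no cancellation along any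
edge, hence splits the `W^{1,1}` seminorm additively, while the gradient of the remainder has
strictly smaller support. Iterating, every function is a constant plus positive multiples of
indicators of simply connected sets, along which the `W^{1,1}` seminorm is additive and an
arbitrary seminorm is subadditive.
-/

section SimplyConnected

variable {V : Type*} {G : SimpleGraph V} {A K : Set V}

/-- A vertex set is simply connected if it and its complement both induce connected subgraphs. Since
connected graphs are nonempty, such a set is neither empty nor everything. -/
def SimplyConnectedIn (G : SimpleGraph V) (A : Set V) : Prop :=
  (G.induce A).Connected ∧ (G.induce Aᶜ).Connected

/-- The outer edge boundary of a vertex set, with every edge oriented so as to leave the set. -/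
def outBoundary (G : SimpleGraph V) (A : Set V) : Set G.Dart :=
  {d | d.fst ∈ A ∧ d.snd ∉ A}

instance finite_dart [Finite V] : Finite G.Dart :=
  .of_injective _ SimpleGraph.Dart.toProd_injective

lemma outBoundary_nonempty (hG : G.Preconnected) (hA : A.Nonempty) (hA' : Aᶜ.Nonempty) :
    (outBoundary G A).Nonempty := by
  obtain ⟨u, hu⟩ := hA
  obtain ⟨v, hv⟩ := hA'
  obtain ⟨p⟩ := hG u v
  obtain ⟨d, -, hd⟩ := p.exists_boundary_dart A hu hv
  exact ⟨d, hd⟩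

lemma outBoundary_componentCompl_subset (C : G.ComponentCompl K) :
    outBoundary G (C : Set V) ⊆ outBoundary G Kᶜ := fun d ⟨hu, hv⟩ =>
  ⟨C.notMem_of_mem hu, fun hvK => hv (C.mem_of_adj _ _ hu hvK d.adj)⟩

lemma outBoundary_compl_componentCompl_subset (C : G.ComponentCompl K) :
    outBoundary G (C : Set V)ᶜ ⊆ outBoundary G K := by
  rintro d ⟨hu, hv⟩
  have hv : d.snd ∈ C := not_not.1 hv
  exact ⟨by_contra fun huK => hu (C.mem_of_adj _ _ hv huK d.adj.symm), C.notMem_of_mem hv⟩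

lemma connected_induce_componentCompl (C : G.ComponentCompl K) :
    (G.induce (C : Set V)).Connected := by
  let φ : C.toSimpleGraph →g G.induce (C : Set V) :=
    { toFun := fun v => ⟨v.1, v.1.2, v.2⟩
      map_rel' := id }
  exact C.connected_toSimpleGraph.map φ fun ⟨v, hvK, hvC⟩ => ⟨⟨⟨v, hvK⟩, hvC⟩, rfl⟩

lemma connected_induce_compl_componentCompl (hG : G.Preconnected) (hK : (G.induce K).Connected)
    (C : G.ComponentCompl K) : (G.induce (C : Set V)ᶜ).Connected := by
  have hKC : K ⊆ (C : Set V)ᶜ := C.disjoint_right.subset_compl_right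
  obtain ⟨k, hk⟩ := hK.nonempty
  refine G.induce_connected_of_patches k (hKC hk) fun {v} hv => ?_
  by_cases hvK : v ∈ K
  · exact ⟨K, hKC, hk, hvK, hK.preconnected _ _⟩
  let D := G.componentComplMk hvK
  have hDC : D ≠ C := fun h => hv (h ▸ G.componentComplMk_mem hvK)
  obtain ⟨⟨d, b⟩, hd, hb, hdb⟩ := D.exists_adj_boundary_pair hG ⟨k, hk⟩
  have hKD : (G.induce (K ∪ (D : Set V))).Connected :=
    G.connected_induce_union hK.preconnected (connected_induce_componentCompl D).preconnected
      hb hd hdb.symm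
  exact ⟨K ∪ D, Set.union_subset hKC
    (SimpleGraph.ComponentCompl.pairwise_disjoint hDC).subset_compl_right,
    .inl hk, .inr (G.componentComplMk_mem hvK), hKD.preconnected _ _⟩

theorem exists_simplyConnectedIn_outBoundary_subset (hG : G.Preconnected) (hA : A.Nonempty)
    (hA' : Aᶜ.Nonempty) : ∃ B, SimplyConnectedIn G B ∧ outBoundary G B ⊆ outBoundary G A := by
  obtain ⟨u, hu⟩ := hA
  obtain ⟨v, hv⟩ := hA'
  let K := G.componentComplMk (K := Aᶜ) (not_not.2 hu)
  have hKA : outBoundary G (K : Set V) ⊆ outBoundary G A := by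
    simpa only [compl_compl] using outBoundary_componentCompl_subset K
  let C := G.componentComplMk (K := (K : Set V)) fun hvK => K.notMem_of_mem hvK hv
  refine ⟨(C : Set V)ᶜ, ⟨?_, ?_⟩, (outBoundary_compl_componentCompl_subset C).trans hKA⟩
  · exact connected_induce_compl_componentCompl hG (connected_induce_componentCompl K) C
  · exact (compl_compl (C : Set V)).symm ▸ connected_induce_componentCompl C

lemma exists_simplyConnectedIn_drop {α : Type*} [LinearOrder α] (hG : G.Preconnected)
    {f : V → α} {x y : V} (hxy : f x < f y) :
    ∃ A, SimplyConnectedIn G A ∧ ∀ d ∈ outBoundary G A, f d.snd < f d.fst := by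
  obtain ⟨A, hA, hsub⟩ := exists_simplyConnectedIn_outBoundary_subset (A := {v | f x < f v}) hG
    ⟨y, hxy⟩ ⟨x, lt_irrefl (f x)⟩
  exact ⟨A, hA, fun d hd => (not_lt.1 (hsub hd).2).trans_lt (hsub hd).1⟩

end SimplyConnected

section Layers

variable {V α β : Type*}

/-- Comonotonicity of two functions along the edges of a graph, i.e. `Monovary` restricted to
adjacent pairs: along no edge do the increments have opposite signs. -/
def MonovaryAlong [Preorder α] [Preorder β] (G : SimpleGraph V) (f : V → α) (g : V → β) : Prop :=
  ∀ ⦃u v⦄, G.Adj u v → g u < g v → f u ≤ f v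

/-- The support of the gradient of a function on the vertices, as a set of oriented edges. -/
def gradientSupport (G : SimpleGraph V) (f : V → α) : Set G.Dart :=
  {d | f d.fst ≠ f d.snd}

variable [AddCommGroup α] [LinearOrder α] [IsOrderedAddMonoid α] {G : SimpleGraph V} {f g : V → α}

lemma MonovaryAlong.abs_sub_add (h : MonovaryAlong G f g) {u v : V} (huv : G.Adj u v) :
    |(f + g) u - (f + g) v| = |f u - f v| + |g u - g v| := by
  rw [Pi.add_apply, Pi.add_apply, add_sub_add_comm, abs_add_eq_add_abs_iff]
  simp only [sub_nonneg, sub_nonpos]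
  rcases lt_trichotomy (g u) (g v) with hlt | heq | hgt
  · exact .inr ⟨h huv hlt, hlt.le⟩
  · exact (le_total (f v) (f u)).imp (⟨·, heq.ge⟩) (⟨·, heq.le⟩)
  · exact .inl ⟨h huv.symm hgt, hgt.le⟩

lemma MonovaryAlong.gradientSupport_subset (h : MonovaryAlong G f g) :
    gradientSupport G f ⊆ gradientSupport G (f + g) := by
  intro d hd
  have hpos : 0 < |f d.fst - f d.snd| := abs_pos.2 (sub_ne_zero.2 hd)
  have hsum : 0 < |(f + g) d.fst - (f + g) d.snd| := by
    rw [h.abs_sub_add d.adj]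
    exact add_pos_of_pos_of_nonneg hpos (abs_nonneg _)
  exact sub_ne_zero.1 (abs_pos.1 hsum)

lemma monovaryAlong_sub_indicator {A : Set V} {t : α} (ht : 0 ≤ t)
    (hdrop : ∀ d ∈ outBoundary G A, t ≤ f d.fst - f d.snd) :
    MonovaryAlong G (f - A.indicator fun _ => t) (A.indicator fun _ => t) := by
  intro u v huv hlt
  have hv : v ∈ A := Set.mem_of_indicator_ne_zero
    ((Set.indicator_nonneg (fun _ _ => ht) u).trans_lt hlt).ne'
  have hu : u ∉ A := fun hu => by simp [hu, hv] at hlt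
  simpa [hu, hv] using le_sub_comm.1 (hdrop ⟨(v, u), huv.symm⟩ ⟨hv, hu⟩)

lemma exists_indicator_sub_gradientSupport_ssubset [Finite V] (hG : G.Preconnected)
    {x y : V} (hxy : f x < f y) : ∃ (A : Set V) (t : α), SimplyConnectedIn G A ∧ 0 < t ∧
      MonovaryAlong G (f - A.indicator fun _ => t) (A.indicator fun _ => t) ∧
      gradientSupport G (f - A.indicator fun _ => t) ⊂ gradientSupport G f := by
  obtain ⟨A, hA, hdrop⟩ := exists_simplyConnectedIn_drop hG hxy
  obtain ⟨d, hd, hmin⟩ := (outBoundary G A).exists_min_image (fun d => f d.fst - f d.snd)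
    (Set.toFinite _) (outBoundary_nonempty hG (Set.nonempty_coe_sort.1 hA.1.nonempty)
      (Set.nonempty_coe_sort.1 hA.2.nonempty))
  have ht : 0 < f d.fst - f d.snd := sub_pos.2 (hdrop d hd)
  have hmono := monovaryAlong_sub_indicator ht.le hmin
  refine ⟨A, f d.fst - f d.snd, hA, ht, hmono, ?_⟩
  refine (Set.ssubset_iff_of_subset ?_).2 ⟨d, (hdrop d hd).ne', not_not.2 ?_⟩
  · simpa only [sub_add_cancel] using hmono.gradientSupport_subset
  · simp [hd.1, hd.2]

theorem simplyConnectedIn_induction [Finite V] (hG : G.Connected) {P : (V → α) → Prop}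
    (const : ∀ c, P fun _ => c)
    (add_indicator : ∀ (g : V → α) (A : Set V) (t : α), SimplyConnectedIn G A → 0 < t →
      MonovaryAlong G g (A.indicator fun _ => t) → P g → P (g + A.indicator fun _ => t))
    (f : V → α) : P f := by
  induction hS : gradientSupport G f using WellFoundedLT.induction generalizing f with
  | _ S ih =>
    subst hS
    by_cases hf : ∃ x y, f x < f y
    · obtain ⟨x, y, hxy⟩ := hf
      obtain ⟨A, t, hA, ht, hmono, hlt⟩ :=
        exists_indicator_sub_gradientSupport_ssubset hG.preconnected hxy
      simpa only [sub_add_cancel] using add_indicator _ A t hA ht hmono (ih _ hlt _ rfl)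
    · push Not at hf
      obtain ⟨x⟩ := hG.nonempty
      have hfx : f = fun _ => f x := funext fun v => le_antisymm (hf x v) (hf v x)
      exact hfx ▸ const (f x)

end Layers

section Sobolev

variable {V : Type*} [Fintype V] [DecidableEq V] (G : SimpleGraph V) [DecidableRel G.Adj]
  (ν : Sym2 V → ℝ)

lemma sobolevW11_const (c : ℝ) : sobolevW11 G ν (fun _ => c) = 0 := by
  refine sum_eq_zero fun e _ => ?_
  induction e with
  | _ u v => simp

lemma sobolevW11_smul (c : ℝ) (f : V → ℝ) : sobolevW11 G ν (c • f) = |c| * sobolevW11 G ν f := by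
  rw [sobolevW11, sobolevW11, mul_sum]
  refine sum_congr rfl fun e _ => ?_
  induction e with
  | _ u v => simp [← mul_sub, abs_mul, mul_assoc]

variable {G}

lemma MonovaryAlong.sobolevW11_add {f g : V → ℝ} (h : MonovaryAlong G f g) :
    sobolevW11 G ν (f + g) = sobolevW11 G ν f + sobolevW11 G ν g := by
  rw [sobolevW11, sobolevW11, sobolevW11, ← sum_add_distrib]
  refine sum_congr rfl fun e he => ?_
  induction e with
  | _ u v => simp only [Sym2.lift_mk, h.abs_sub_add (SimpleGraph.mem_edgeFinset.1 he), add_mul]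

end Sobolev

theorem seminorm_le_of_simply_connected_general
    {V : Type*} [Fintype V] [DecidableEq V]
    (G : SimpleGraph V) [DecidableRel G.Adj] (hG : G.Connected)
    (ν : Sym2 V → ℝ) (p : Seminorm ℝ (V → ℝ)) (hp1 : p (fun _ => (1 : ℝ)) = 0) (C : ℝ)
    (hSC : ∀ A : Set V, SimplyConnectedIn G A →
      p (A.indicator fun _ => (1 : ℝ)) ≤ C * sobolevW11 G ν (A.indicator fun _ => (1 : ℝ)))
    (f : V → ℝ) : p f ≤ C * sobolevW11 G ν f := by
  induction f using simplyConnectedIn_induction (α := ℝ) hG with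
  | const c =>
    have hc : (fun _ : V => c) = c • fun _ => (1 : ℝ) := by ext; simp
    rw [sobolevW11_const, mul_zero, hc, map_smul_eq_mul, hp1, mul_zero]
  | add_indicator g A t hA ht hmono ih =>
    have hlayer : (A.indicator fun _ => t) = t • A.indicator fun _ => (1 : ℝ) := by
      ext v; by_cases hv : v ∈ A <;> simp [hv]
    calc p (g + A.indicator fun _ => t)
        ≤ p g + t * p (A.indicator fun _ => 1) := by
          simpa only [hlayer, map_smul_eq_mul, Real.norm_of_nonneg ht.le] using
            map_add_le_add p g (A.indicator fun _ => t)
      _ ≤ C * sobolevW11 G ν g + t * (C * sobolevW11 G ν (A.indicator fun _ => 1)) := by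
          gcongr
          exact hSC A hA
      _ = C * sobolevW11 G ν (g + A.indicator fun _ => t) := by
          rw [hmono.sobolevW11_add, hlayer, sobolevW11_smul, abs_of_pos ht]
          ring

/-- **Reduction to simply connected sets.** Let `G = (V,E)` be a finite
connected graph, `ν` a fully supported positive measure on `E`, `|||·|||` a seminorm on
`ℝ^V` vanishing on `1_V`, and `C ∈ [0,∞)`. If `|||1_A||| ≤ C·‖1_A‖_{W^{1,1}(ν)}` for every
simply connected `A ⊆ V` (i.e. both `A` and `Aᶜ` induce connected subgraphs), then
`|||f||| ≤ C·‖f‖_{W^{1,1}(ν)}` for every `f : V → ℝ`. -/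
theorem seminorm_le_of_simply_connected
    {V : Type} [Fintype V] [DecidableEq V]
    (G : SimpleGraph V) [DecidableRel G.Adj] (hG : G.Connected)
    (ν : Sym2 V → ℝ) (hν : ∀ e ∈ G.edgeSet, 0 < ν e)
    (p : Seminorm ℝ (V → ℝ)) (hp1 : p (fun _ => (1 : ℝ)) = 0)
    (C : ℝ) (hC : 0 ≤ C)
    (hSC : ∀ A : Set V, ((G.induce A).Connected ∧ (G.induce Aᶜ).Connected) →
      p (A.indicator fun _ => (1 : ℝ)) ≤ C * sobolevW11 G ν (A.indicator fun _ => (1 : ℝ))) :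
    ∀ f : V → ℝ, p f ≤ C * sobolevW11 G ν f := by
  exact seminorm_le_of_simply_connected_general G hG ν p hp1 C hSC
end

section
/- Let G = (V,E) be a finite unweighted graph with shortest-path metric d, let A ⊆ V be a connected subset, and suppose there exist r > 0 and an r-separated subset S ⊆ A (meaning d(u,v) ≥ r for all distinct u,v ∈ S) with |S| ≥ 2. Then r·|S| ≤ 3·|A|. -/
/-!
Let `k = ⌈r / 2⌉`. A shortest path inside `A` from a point of `S` to another one passes through
distances `0, 1, …, k - 1`, so each ball of radius `k` in `G.induce A` around a point of `S` has at
least `k` vertices. Distances in `G.induce A` dominate those in `G`, so distinct points of `S` are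
at a distance `d ≥ r` there; as `d` is an integer, `2 * k ≤ d + 1`, which makes their open balls of
radius `k` disjoint. Hence `(r / 2) * |S| ≤ k * |S| ≤ |A|`.
-/

theorem mul_encard_le_encard_biUnion {ι α : Type*} {s : Set ι} (hs : s.Finite) {f : ι → Set α}
    (hf : s.PairwiseDisjoint f) {c : ℕ∞} (hc : ∀ i ∈ s, c ≤ (f i).encard) :
    c * s.encard ≤ (⋃ i ∈ s, f i).encard := by
  rw [hs.encard_biUnion hf]
  lift s to Finset ι using hs
  rw [finsum_mem_coe_finset, Set.encard_coe_eq_coe_finsetCard, mul_comm, ← nsmul_eq_mul]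
  exact s.card_nsmul_le_sum _ _ hc

theorem two_mul_ceil_half_le_add_one {K : Type*} [Field K] [LinearOrder K] [IsStrictOrderedRing K]
    [FloorSemiring K] {r : K} {d : ℕ} (h : r ≤ d) : 2 * ⌈r / 2⌉₊ ≤ d + 1 := by
  have hd : (d : K) ≤ 2 * ((d + 1) / 2 : ℕ) := by exact_mod_cast (by lia : d ≤ 2 * ((d + 1) / 2))
  have : ⌈r / 2⌉₊ ≤ (d + 1) / 2 := Nat.ceil_le.2 (by linarith)
  lia

section Distance

variable {V W : Type*} {G : SimpleGraph V}

theorem edist_map_le {H : SimpleGraph W} (f : G →g H) (u v : V) :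
    H.edist (f u) (f v) ≤ G.edist u v :=
  le_iInf fun p ↦ by simpa only [SimpleGraph.Walk.length_map] using (p.map f).edist_le

theorem dist_le_edist_induce {A : Set V} (u v : A) : G.dist u v ≤ (G.induce A).edist u v :=
  (ENat.natCast_toNat_le_self _).trans (edist_map_le (SimpleGraph.Embedding.induce A).toHom u v)

theorem exists_edist_eq_of_le_edist {u v : V} (huv : G.Reachable u v) {k : ℕ}
    (hk : k ≤ G.edist u v) : ∃ w, G.edist u w = k := by
  obtain ⟨p, hp⟩ := huv.exists_walk_length_eq_dist
  rw [← huv.coe_dist_eq_edist, Nat.cast_le, ← hp] at hk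
  have h_take : (p.take k).length = G.dist u (p.getVert k) :=
    SimpleGraph.length_eq_dist_of_subwalk hp (p.isSubwalk_take k)
  rw [p.take_length, min_eq_left hk] at h_take
  exact ⟨p.getVert k, by rw [← (p.take k).reachable.coe_dist_eq_edist, ← h_take]⟩

theorem le_encard_ball {u v : V} (huv : G.Reachable u v) {k : ℕ} (hk : k ≤ G.edist u v + 1) :
    k ≤ (G.ball u k).encard := by
  have h_image : (Nat.cast '' Set.Iio k : Set ℕ∞) ⊆ G.edist u '' G.ball u k := by
    rintro _ ⟨i, hik : i < k, rfl⟩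
    have hi : (i : ℕ∞) ≤ G.edist u v :=
      ENat.lt_add_one_iff' (ENat.natCast_ne_top i) |>.1 ((Nat.cast_lt.2 hik).trans_le hk)
    obtain ⟨w, hw⟩ := exists_edist_eq_of_le_edist huv hi
    exact ⟨w, by simpa [SimpleGraph.edist_comm, hw] using hik, hw⟩
  calc (k : ℕ∞) = (Nat.cast '' Set.Iio k : Set ℕ∞).encard := by
        rw [Nat.cast_injective.encard_image]
        exact (Set.Nat.encard_range k).symm
    _ ≤ (G.edist u '' G.ball u k).encard := Set.encard_le_encard h_image
    _ ≤ (G.ball u k).encard := Set.encard_image_le _ _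

theorem disjoint_ball_ball {u v : V} {k l : ℕ∞} (h : k + l ≤ G.edist u v + 1) :
    Disjoint (G.ball u k) (G.ball v l) := by
  refine Set.disjoint_left.2 fun w (hwu : G.edist w u < k) (hwv : G.edist w v < l) ↦ ?_
  have h_le : (G.edist w u + 1) + (G.edist w v + 1) ≤ G.edist w u + G.edist w v + 1 :=
    calc (G.edist w u + 1) + (G.edist w v + 1) ≤ k + l :=
          add_le_add (Order.add_one_le_of_lt hwu) (Order.add_one_le_of_lt hwv)
      _ ≤ G.edist u v + 1 := h
      _ ≤ G.edist w u + G.edist w v + 1 := by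
        gcongr
        exact G.edist_comm (u := w) (v := u) ▸ SimpleGraph.edist_triangle
  lift G.edist w u to ℕ using hwu.ne_top with a
  lift G.edist w v to ℕ using hwv.ne_top with b
  norm_cast at h_le
  lia

theorem mul_encard_le_card_of_pairwise_le_edist (hG : G.Preconnected) {S : Set V}
    (hS : S.Nontrivial) {k : ℕ} (hsep : S.Pairwise fun u v ↦ 2 * k ≤ G.edist u v + 1) :
    k * S.encard ≤ ENat.card V := by
  obtain hfin | hinf := S.finite_or_infinite
  · have h_disj : S.PairwiseDisjoint (G.ball · k) := fun u hu v hv huv ↦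
      disjoint_ball_ball (by simpa only [two_mul] using hsep hu hv huv)
    have h_ball : ∀ u ∈ S, k ≤ (G.ball u k).encard := fun u hu ↦ by
      obtain ⟨v, hv, hvu⟩ := hS.exists_ne u
      have hk : (k : ℕ∞) ≤ 2 * k := le_mul_of_one_le_left' one_le_two
      exact le_encard_ball (hG u v) (hk.trans (hsep hu hv hvu.symm))
    exact (mul_encard_le_encard_biUnion hfin h_disj h_ball).trans Set.encard_le_card
  · have : Infinite V := Set.infinite_univ_iff.1 (hinf.mono S.subset_univ)
    simp only [ENat.card_eq_top_of_infinite, le_top]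

end Distance

theorem separated_subset_card_bound_general {V : Type*} (G : SimpleGraph V) {A : Set V}
    (hfin : A.Finite) (hA : (G.induce A).Preconnected) {r : ℝ} {S : Set V} (hSA : S ⊆ A)
    (hS : S.Nontrivial) (hsep : S.Pairwise fun u v ↦ r ≤ G.dist u v) :
    r * S.ncard ≤ 2 * A.ncard := by
  obtain ⟨T, rfl⟩ : ∃ T : Set A, Subtype.val '' T = S :=
    Set.subset_range_iff_exists_image_eq.1 (by rwa [Subtype.range_coe])
  have hT_sep : T.Pairwise fun u v ↦ 2 * ⌈r / 2⌉₊ ≤ (G.induce A).edist u v + 1 := by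
    intro u hu v hv huv
    have hr : r ≤ G.dist u v :=
      hsep (Set.mem_image_of_mem _ hu) (Set.mem_image_of_mem _ hv) (Subtype.coe_ne_coe.2 huv)
    calc (2 * ⌈r / 2⌉₊ : ℕ∞) ≤ G.dist u v + 1 := by
          exact_mod_cast two_mul_ceil_half_le_add_one hr
      _ ≤ (G.induce A).edist u v + 1 := by gcongr; exact dist_le_edist_induce u v
  have h_card : ⌈r / 2⌉₊ * (Subtype.val '' T).ncard ≤ A.ncard := by
    have h := mul_encard_le_card_of_pairwise_le_edist hA (Set.nontrivial_of_image _ _ hS) hT_sep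
    rw [← Subtype.val_injective.encard_image, ENat.card_coe_set_eq, ← hfin.cast_ncard_eq,
      ← (hfin.subset hSA).cast_ncard_eq] at h
    exact_mod_cast h
  calc r * (Subtype.val '' T).ncard = 2 * (r / 2 * (Subtype.val '' T).ncard) := by ring
    _ ≤ 2 * (⌈r / 2⌉₊ * (Subtype.val '' T).ncard) := by gcongr; exact Nat.le_ceil _
    _ ≤ 2 * A.ncard := by gcongr; exact_mod_cast h_card

/-- Let `G = (V,E)` be a finite unweighted graph with shortest-path
metric `d`, let `A ⊆ V` be a connected subset, and suppose there exist `r > 0` and an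
`r`-separated subset `S ⊆ A` (i.e. `d(u,v) ≥ r` for all distinct `u,v ∈ S`) with `|S| ≥ 2`.
Then `r·|S| ≤ 3·|A|`. -/
theorem separated_subset_card_bound
    {V : Type} [Fintype V] (G : SimpleGraph V) (A : Set V)
    (hA : (G.induce A).Connected)
    (r : ℝ) (hr : 0 < r) (S : Set V) (hSA : S ⊆ A)
    (hsep : ∀ u ∈ S, ∀ v ∈ S, u ≠ v → r ≤ (G.dist u v : ℝ))
    (hS2 : 2 ≤ S.ncard) :
    r * S.ncard ≤ 3 * A.ncard := by
  have h_two := separated_subset_card_bound_general G A.toFinite hA.preconnected hSA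
    (Set.one_lt_ncard_iff_nontrivial.1 hS2) (hsep · · · ·)
  exact h_two.trans (by gcongr; norm_num)
end

section
/- There exist constants c > 0 and s₀ such that for every integer s ≥ s₀, c₁(M₂^s) ≥ c·log s, where M₂^s is the set of uniform probability distributions on s-point subsets of ℝ² equipped with the earth mover's distance. -/
open Finset MeasureTheory

/-- The `L₁`-distortion of a space `M` equipped with a distance function `ρ`:
the infimum of `D ≥ 1` such that there is a measure space `(Ω, ν)` and a map
`f : M → L₁(ν)` with `ρ x y ≤ ‖f x - f y‖₁ ≤ D * ρ x y` for all `x, y`. -/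
noncomputable def c1OfDist {M : Type*} (ρ : M → M → ℝ) : ℝ :=
  sInf { D : ℝ | 1 ≤ D ∧ ∃ (Ω : Type) (_ : MeasurableSpace Ω) (ν : Measure Ω)
    (f : M → Lp ℝ 1 ν), ∀ x y : M,
      ρ x y ≤ dist (f x) (f y) ∧ dist (f x) (f y) ≤ D * ρ x y }

/-- The earth mover's (Wasserstein-1) distance between the uniform distributions on two
finite subsets `S, T` of the Euclidean plane, via the Kantorovich dual formulation:
`sup{|∫ f dμ_S − ∫ f dμ_T| : f 1-Lipschitz}`. -/
noncomputable def emdUnif (S T : Finset (EuclideanSpace ℝ (Fin 2))) : ℝ :=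
  sSup { c : ℝ | ∃ f : EuclideanSpace ℝ (Fin 2) → ℝ, LipschitzWith 1 f ∧
    c = |(∑ x ∈ S, f x) / S.card - (∑ y ∈ T, f y) / T.card| }

/-!
Let `f` embed `M₂^s` into `L₁` with distortion `D`, and let `m = 2^K` be the largest power of two
with `m^47 ≤ s`, so that `K` is comparable to `log s`. Put at most `s` points on the integer points
of the square `[0, m]²` and park the remaining ones at the origin. Averaging `f` over
configurations with large multiplicities makes it nearly affine, so that at a typical
configuration its derivative is a function `h` from the grid to `L₁` with two properties:

* neighbouring values of `h` differ by at most a constant multiple of `D / s`, since moving one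
  point by a unit costs `1 / s`;
* if the square is divided into `M²` blocks of side `2H`, then for every position `p` and every
  choice of signs the signed sum over the blocks of `h(p) - h(p + (H, 0))` has norm at least
  `M² H / 2s`, since each of `M²` points has to travel a distance `H`.

On the other hand, `L₁`-valued functions on the grid satisfy a multiscale Sobolev inequality. The
coarea formula reduces it to indicators of sets. If such a set has perimeter `P`, the scale `2^i`
contributes at most `min (P² / 2^i) √(2 P 2^i)`, by an isoperimetric inequality in the blocks and
by cancellation of the signs, and these bounds form two geometric series that sum to at most `7 P`.
Applied to `h`, the inequality bounds `K m² / 4s`, the total contribution of the `K` scales, by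
the total variation of `h`, which is at most a multiple of `D m² / s`. Hence `K` is at most a
multiple of `D`.
-/

open scoped BigOperators

section RademacherAverage

variable {ι E : Type*} [Fintype ι] [DecidableEq ι] [NormedAddCommGroup E]

/-- The Rademacher average of a finite family `y`: the mean of `‖∑ ± y i‖` over all choices
of signs. -/
noncomputable def rademacherAverage (y : ι → E) : ℝ :=
  𝔼 ε : ι → ℤˣ, ‖∑ i, ε i • y i‖

theorem rademacherAverage_le_sum_norm (y : ι → E) : rademacherAverage y ≤ ∑ i, ‖y i‖ :=
  expect_le univ_nonempty fun ε _ => (norm_sum_le _ _).trans_eq (by simp [norm_units_zsmul])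

theorem expect_sign_mul_sign {i j : ι} (hij : i ≠ j) :
    𝔼 ε : ι → ℤˣ, ((ε i : ℤ) : ℝ) * (ε j : ℤ) = 0 := by
  have h := Fintype.expect_equiv (Equiv.mulLeft (Pi.mulSingle i (-1 : ℤˣ)))
    (fun ε : ι → ℤˣ => ((ε i : ℤ) : ℝ) * (ε j : ℤ)) (fun ε => -(((ε i : ℤ) : ℝ) * (ε j : ℤ)))
    fun ε => by simp [Pi.mulSingle_eq_of_ne hij.symm]
  rw [expect_neg_distrib] at h
  linarith

theorem expect_sum_sign_mul_sq (y : ι → ℝ) :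
    𝔼 ε : ι → ℤˣ, (∑ i, ε i • y i) ^ 2 = ∑ i, y i ^ 2 := by
  have expand (ε : ι → ℤˣ) : (∑ i, ε i • y i) ^ 2 =
      ∑ i, ∑ j, y i * y j * (((ε i : ℤ) : ℝ) * (ε j : ℤ)) := by
    simp only [sq, sum_mul_sum, Units.smul_def, zsmul_eq_mul]
    exact sum_congr rfl fun i _ => sum_congr rfl fun j _ => by ring
  simp only [expand, expect_sum_comm, ← mul_expect]
  refine sum_congr rfl fun i _ => ?_
  rw [sum_eq_single i (fun j _ hji => by rw [expect_sign_mul_sign hji.symm, mul_zero])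
    (by simp)]
  have one (ε : ι → ℤˣ) : ((ε i : ℤ) : ℝ) * (ε i : ℤ) = 1 := by
    exact_mod_cast Int.units_coe_mul_self (ε i)
  simp only [one, Fintype.expect_const, mul_one, sq]

theorem rademacherAverage_le_sqrt (y : ι → ℝ) :
    rademacherAverage y ≤ √(∑ i, y i ^ 2) := by
  refine Real.le_sqrt_of_sq_le ?_
  have cauchySchwarz := expect_mul_sq_le_sq_mul_sq univ (fun _ : ι → ℤˣ => (1 : ℝ))
    (fun ε => ‖∑ i, ε i • y i‖)
  simpa [expect_sum_sign_mul_sq, rademacherAverage] using cauchySchwarz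

end RademacherAverage

section GridVariation

variable {E : Type*} [NormedAddCommGroup E]

/-- The total variation of a function along the path `0, 1, …, n`. -/
def pathVariation (φ : ℕ → E) (n : ℕ) : ℝ := ∑ k ∈ range n, ‖φ (k + 1) - φ k‖

theorem pathVariation_nonneg (φ : ℕ → E) (n : ℕ) : 0 ≤ pathVariation φ n :=
  sum_nonneg fun _ _ => norm_nonneg _

theorem norm_sub_le_pathVariation (φ : ℕ → E) {i j n : ℕ} (hi : i ≤ n) (hj : j ≤ n) :
    ‖φ i - φ j‖ ≤ pathVariation φ n := by
  wlog hij : i ≤ j generalizing i j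
  · rw [norm_sub_rev]
    exact this hj hi (le_of_not_ge hij)
  calc ‖φ i - φ j‖ ≤ ∑ k ∈ Ico i j, ‖φ (k + 1) - φ k‖ := by
        simpa only [dist_eq_norm, norm_sub_rev] using dist_le_Ico_sum_dist φ hij
    _ ≤ pathVariation φ n :=
        sum_le_sum_of_subset_of_nonneg (fun k hk => by simp at hk ⊢; omega)
          fun _ _ _ => norm_nonneg _

/-- The total variation of `h` over the edges of the grid that leave a vertex of the square
`[0, n)²` in a positive coordinate direction. -/
def gridVariation (h : ℕ × ℕ → E) (n : ℕ) : ℝ :=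
  ∑ p ∈ range n ×ˢ range n, (‖h (p + (1, 0)) - h p‖ + ‖h (p + (0, 1)) - h p‖)

theorem gridVariation_nonneg (h : ℕ × ℕ → E) (n : ℕ) : 0 ≤ gridVariation h n :=
  sum_nonneg fun _ _ => by positivity

theorem gridVariation_eq_sum_pathVariation (h : ℕ × ℕ → E) (n : ℕ) :
    gridVariation h n = ∑ y ∈ range n, pathVariation (fun x => h (x, y)) n +
      ∑ x ∈ range n, pathVariation (fun y => h (x, y)) n := by
  simp only [gridVariation, pathVariation, sum_add_distrib, sum_product, Prod.mk_add_mk, add_zero]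
  rw [sum_comm]

theorem sum_row_pathVariation_le (h : ℕ × ℕ → E) (n : ℕ) :
    ∑ y ∈ range n, pathVariation (fun x => h (x, y)) n ≤ gridVariation h n := by
  rw [gridVariation_eq_sum_pathVariation]
  exact le_add_of_nonneg_right (sum_nonneg fun _ _ => pathVariation_nonneg _ _)

theorem sum_column_pathVariation_le (h : ℕ × ℕ → E) (n : ℕ) :
    ∑ x ∈ range n, pathVariation (fun y => h (x, y)) n ≤ gridVariation h n := by
  rw [gridVariation_eq_sum_pathVariation]
  exact le_add_of_nonneg_left (sum_nonneg fun _ _ => pathVariation_nonneg _ _)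

theorem sum_range_mul {A : Type*} [AddCommMonoid A] (M n : ℕ) (F : ℕ → A) :
    ∑ k ∈ range (M * n), F k = ∑ q : Fin M, ∑ a ∈ range n, F (q * n + a) := by
  rw [sum_range, ← finProdFinEquiv.sum_comp, Fintype.sum_prod_type]
  simp [sum_range, add_comm, mul_comm]

/-- The lower left corner of the block with index `q` when the square `[0, M * n)²` is divided
into `M²` blocks of side `n`. -/
def blockCorner {M : ℕ} (n : ℕ) (q : Fin M × Fin M) : ℕ × ℕ := (q.1 * n, q.2 * n)

theorem gridVariation_mul (h : ℕ × ℕ → E) (M n : ℕ) :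
    gridVariation h (M * n) =
      ∑ q : Fin M × Fin M, gridVariation (fun p => h (blockCorner n q + p)) n := by
  simp only [gridVariation, sum_product, sum_range_mul, Fintype.sum_prod_type, blockCorner,
    ← add_assoc, Prod.mk_add_mk]
  refine sum_congr rfl fun _ _ => ?_
  rw [sum_comm]

theorem norm_sub_shift_le_row_pathVariation (h : ℕ × ℕ → E) {H x : ℕ} (y : ℕ) (hx : x < H) :
    ‖h (x, y) - h (x + H, y)‖ ≤ pathVariation (fun x => h (x, y)) (2 * H) :=
  norm_sub_le_pathVariation (fun x => h (x, y)) (hx.le.trans (by omega)) (by omega)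

theorem sum_norm_sub_shift_le_mul_row_pathVariation (h : ℕ × ℕ → E) (H : ℕ) :
    ∑ p ∈ range H ×ˢ range (2 * H), ‖h p - h (p + (H, 0))‖ ≤
      H * ∑ y ∈ range (2 * H), pathVariation (fun x => h (x, y)) (2 * H) := by
  rw [sum_product]
  refine (sum_le_card_nsmul _ _ _ fun x hx => sum_le_sum fun y _ =>
    norm_sub_shift_le_row_pathVariation h y (mem_range.1 hx)).trans_eq ?_
  rw [card_range, nsmul_eq_mul]

end GridVariation

section Indicator

variable {f : ℕ × ℕ → ℝ}

theorem abs_sub_eq_zero_or_one {a b : ℝ} (ha : a = 0 ∨ a = 1) (hb : b = 0 ∨ b = 1) :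
    |a - b| = 0 ∨ |a - b| = 1 := by
  rcases ha with rfl | rfl <;> rcases hb with rfl | rfl <;> norm_num

theorem le_mul_of_eq_zero_or_one {d a b : ℝ} (hd : d = 0 ∨ d = 1) (hd0 : 0 ≤ d) (ha : d ≤ a)
    (hb : d ≤ b) : d ≤ a * b :=
  calc d = d * d := by rcases hd with rfl | rfl <;> norm_num
    _ ≤ a * b := mul_le_mul ha hb hd0 (hd0.trans ha)

theorem norm_sub_shift_le_of_row_const {H x y y₀ : ℕ} (hy : y ≤ 2 * H)
    (hy₀ : y₀ ≤ 2 * H) (hf : f (x, y₀) = f (x + H, y₀)) :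
    ‖f (x, y) - f (x + H, y)‖ ≤ pathVariation (fun y => f (x, y)) (2 * H) +
      pathVariation (fun y => f (x + H, y)) (2 * H) :=
  calc ‖f (x, y) - f (x + H, y)‖
      = ‖(f (x, y) - f (x, y₀)) + (f (x + H, y₀) - f (x + H, y))‖ := by rw [hf]; ring_nf
    _ ≤ _ := norm_add_le_of_le
        (norm_sub_le_pathVariation (fun y => f (x, y)) hy hy₀)
        (norm_sub_le_pathVariation (fun y => f (x + H, y)) hy₀ hy)

theorem sum_norm_sub_shift_le_of_row_const {H y₀ : ℕ} (hf : ∀ p, f p = 0 ∨ f p = 1)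
    (hy₀ : y₀ < 2 * H) (hrow : ∀ x < H, f (x, y₀) = f (x + H, y₀)) :
    ∑ p ∈ range H ×ˢ range (2 * H), ‖f p - f (p + (H, 0))‖ ≤ gridVariation f (2 * H) ^ 2 := by
  let R y := pathVariation (fun x => f (x, y)) (2 * H)
  let C x := pathVariation (fun y => f (x, y)) (2 * H)
  have pointwise : ∀ p ∈ range H ×ˢ range (2 * H),
      ‖f p - f (p + (H, 0))‖ ≤ (C p.1 + C (p.1 + H)) * R p.2 := by
    rintro ⟨x, y⟩ hp
    obtain ⟨hx, hy⟩ : x < H ∧ y < 2 * H := by simpa using hp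
    exact le_mul_of_eq_zero_or_one (abs_sub_eq_zero_or_one (hf _) (hf _)) (norm_nonneg _)
      (norm_sub_shift_le_of_row_const hy.le hy₀.le (hrow x hx))
      (norm_sub_shift_le_row_pathVariation f y hx)
  calc ∑ p ∈ range H ×ˢ range (2 * H), ‖f p - f (p + (H, 0))‖
      ≤ (∑ x ∈ range H, (C x + C (x + H))) * ∑ y ∈ range (2 * H), R y := by
        rw [sum_mul_sum, ← sum_product']
        exact sum_le_sum pointwise
    _ = (∑ x ∈ range (2 * H), C x) * ∑ y ∈ range (2 * H), R y := by
        rw [two_mul H, sum_range_add C, sum_add_distrib]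
        simp only [add_comm H]
    _ ≤ gridVariation f (2 * H) ^ 2 := by
        rw [sq]
        exact mul_le_mul (sum_column_pathVariation_le f _) (sum_row_pathVariation_le f _)
          (sum_nonneg fun _ _ => pathVariation_nonneg _ _) (gridVariation_nonneg f _)

theorem sum_norm_sub_shift_le_sq_gridVariation (hf : ∀ p, f p = 0 ∨ f p = 1) (H : ℕ) :
    ∑ p ∈ range H ×ˢ range (2 * H), ‖f p - f (p + (H, 0))‖ ≤ gridVariation f (2 * H) ^ 2 := by
  let R y := pathVariation (fun x => f (x, y)) (2 * H)
  by_cases hrow : ∃ y₀ ∈ range (2 * H), R y₀ < 1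
  · obtain ⟨y₀, hy₀, hR⟩ := hrow
    refine sum_norm_sub_shift_le_of_row_const hf (mem_range.1 hy₀) fun x hx => ?_
    have lt_one := (norm_sub_shift_le_row_pathVariation f y₀ hx).trans_lt hR
    rcases abs_sub_eq_zero_or_one (hf (x, y₀)) (hf (x + H, y₀)) with h0 | h1
    · exact sub_eq_zero.1 (abs_eq_zero.1 h0)
    · exact absurd h1 lt_one.ne
  · push Not at hrow
    have two_mul_le : 2 * (H : ℝ) ≤ ∑ y ∈ range (2 * H), R y := by
      simpa using card_nsmul_le_sum _ _ _ hrow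
    have row_le : ∑ y ∈ range (2 * H), R y ≤ gridVariation f (2 * H) :=
      sum_row_pathVariation_le f _
    calc _ ≤ H * ∑ y ∈ range (2 * H), R y := sum_norm_sub_shift_le_mul_row_pathVariation f H
      _ ≤ gridVariation f (2 * H) ^ 2 := by nlinarith [H.cast_nonneg (α := ℝ)]

end Indicator

section Multiscale

variable {E : Type*} [NormedAddCommGroup E]

/-- Divide `[0, M * 2H)²` into `M²` blocks of side `2H`; the family, over all blocks, of the
differences of `h` between the point at position `p` of the block and its translate by
`(H, 0)`. -/
def blockDifference (h : ℕ × ℕ → E) (M H : ℕ) (p : ℕ × ℕ) (q : Fin M × Fin M) : E :=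
  h (blockCorner (2 * H) q + p) - h (blockCorner (2 * H) q + (p + (H, 0)))

/-- The left-hand side of the multiscale Sobolev inequality on the grid `[0, 2^K)²`: over all
scales `2^i`, the sum of the Rademacher averages of the block differences at that scale, each
scale being weighted by the inverse of its length. -/
noncomputable def multiscaleVariation (K : ℕ) (h : ℕ × ℕ → E) : ℝ :=
  ∑ i ∈ range K, (2 ^ i : ℝ)⁻¹ * ∑ p ∈ range (2 ^ i) ×ˢ range (2 * 2 ^ i),
    rademacherAverage (blockDifference h (2 ^ (K - 1 - i)) (2 ^ i) p)

theorem sum_norm_blockDifference_le (h : ℕ × ℕ → E) (M H : ℕ) :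
    ∑ p ∈ range H ×ˢ range (2 * H), ∑ q, ‖blockDifference h M H p q‖ ≤
      H * gridVariation h (M * (2 * H)) := by
  rw [sum_comm, gridVariation_mul, mul_sum]
  refine sum_le_sum fun q _ => ?_
  let k p := h (blockCorner (2 * H) q + p)
  calc ∑ p ∈ range H ×ˢ range (2 * H), ‖blockDifference h M H p q‖
      ≤ H * ∑ y ∈ range (2 * H), pathVariation (fun x => k (x, y)) (2 * H) :=
        sum_norm_sub_shift_le_mul_row_pathVariation k H
    _ ≤ H * gridVariation k (2 * H) :=
        mul_le_mul_of_nonneg_left (sum_row_pathVariation_le k _) H.cast_nonneg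

section Indicator

variable {f : ℕ × ℕ → ℝ} (hf : ∀ p, f p = 0 ∨ f p = 1)
include hf

theorem sum_rademacherAverage_blockDifference_le_sq (M H : ℕ) :
    ∑ p ∈ range H ×ˢ range (2 * H), rademacherAverage (blockDifference f M H p) ≤
      gridVariation f (M * (2 * H)) ^ 2 :=
  calc _ ≤ ∑ p ∈ range H ×ˢ range (2 * H), ∑ q, ‖blockDifference f M H p q‖ :=
        sum_le_sum fun _ _ => rademacherAverage_le_sum_norm _
    _ ≤ ∑ q : Fin M × Fin M,
          gridVariation (fun p => f (blockCorner (2 * H) q + p)) (2 * H) ^ 2 := by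
        rw [sum_comm]
        exact sum_le_sum fun q _ => sum_norm_sub_shift_le_sq_gridVariation (fun _ => hf _) H
    _ ≤ _ := by
        rw [gridVariation_mul]
        exact sum_sq_le_sq_sum_of_nonneg fun _ _ => gridVariation_nonneg _ _

theorem sum_rademacherAverage_blockDifference_le_sqrt (M H : ℕ) :
    ∑ p ∈ range H ×ˢ range (2 * H), rademacherAverage (blockDifference f M H p) ≤
      H * √(2 * gridVariation f (M * (2 * H)) * H) := by
  have sq_eq (p q) : blockDifference f M H p q ^ 2 = ‖blockDifference f M H p q‖ := by
    rw [← sq_abs, ← Real.norm_eq_abs]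
    rcases abs_sub_eq_zero_or_one (hf (blockCorner (2 * H) q + p))
        (hf (blockCorner (2 * H) q + (p + (H, 0)))) with h | h <;>
      simp [blockDifference, h]
  calc _ ≤ ∑ p ∈ range H ×ˢ range (2 * H), √1 * √(∑ q, ‖blockDifference f M H p q‖) :=
        sum_le_sum fun p _ => by
          simpa only [sq_eq, Real.sqrt_one, one_mul] using
            rademacherAverage_le_sqrt (blockDifference f M H p)
    _ ≤ √(2 * (H : ℝ) ^ 2) *
          √(∑ p ∈ range H ×ˢ range (2 * H), ∑ q, ‖blockDifference f M H p q‖) := by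
        refine (Real.sum_sqrt_mul_sqrt_le _ (fun _ => zero_le_one)
          fun p => sum_nonneg fun q _ => norm_nonneg (blockDifference f M H p q)).trans_eq ?_
        simp only [sum_const, card_product, card_range, nsmul_eq_mul]
        push_cast
        ring_nf
    _ ≤ √(2 * (H : ℝ) ^ 2) * √(H * gridVariation f (M * (2 * H))) := by
        gcongr
        exact sum_norm_blockDifference_le f M H
    _ = H * √(2 * gridVariation f (M * (2 * H)) * H) := by
        rw [← Real.sqrt_mul (by positivity), ← Real.sqrt_sq H.cast_nonneg,
          ← Real.sqrt_mul (by positivity), Real.sqrt_sq H.cast_nonneg]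
        ring_nf

end Indicator

theorem sum_le_mul_sqrt_of_le_sqrt {P : ℝ} {u : ℕ → ℝ} (hu : ∀ i, u i ≤ √(2 * P * 2 ^ i))
    (K : ℕ) : ∑ i ∈ range K, u i ≤ 7 / 2 * √(P * 2 ^ K) := by
  induction K with
  | zero => simp
  | succ K ih =>
    rw [sum_range_succ, show P * 2 ^ (K + 1) = 2 * (P * 2 ^ K) by ring,
      Real.sqrt_mul zero_le_two]
    have last := hu K
    rw [mul_assoc, Real.sqrt_mul zero_le_two] at last
    have sqrt_two : (7 / 5 : ℝ) ≤ √2 := Real.le_sqrt_of_sq_le (by norm_num)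
    nlinarith [Real.sqrt_nonneg (P * 2 ^ K)]

theorem sqrt_mul_le_add_div_two {x y : ℝ} (hx : 0 ≤ x) (hy : 0 ≤ y) : √(x * y) ≤ (x + y) / 2 :=
  Real.sqrt_le_iff.2 ⟨by positivity, by nlinarith [sq_nonneg (x - y)]⟩

theorem sum_le_of_le_sq_div_of_le_sqrt_of_le {P : ℝ} (hP : 0 ≤ P) {u : ℕ → ℝ}
    (hu_sq : ∀ i, u i ≤ P ^ 2 / 2 ^ i) (hu_sqrt : ∀ i, u i ≤ √(2 * P * 2 ^ i)) {K : ℕ}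
    (hK : P ≤ 2 ^ K) : ∑ i ∈ range K, u i ≤ 7 * P - 2 * (P ^ 2 / 2 ^ K) := by
  induction K with
  | zero =>
    norm_num at hK ⊢
    nlinarith
  | succ K ih =>
    have last := hu_sq K
    have half : P ^ 2 / 2 ^ (K + 1) = P ^ 2 / 2 ^ K / 2 := by ring
    rw [sum_range_succ, half]
    rcases le_total P (2 ^ K) with hPK | hPK
    · linarith [ih hPK]
    · have crossover := sum_le_mul_sqrt_of_le_sqrt hu_sqrt K
      have amgm : √(P * 2 ^ K) ≤ (P + 2 ^ K) / 2 := sqrt_mul_le_add_div_two hP (by positivity)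
      rw [pow_succ] at hK
      have ratio : P ^ 2 / 2 ^ K ≤ 3 * P - 2 * 2 ^ K := by
        rw [div_le_iff₀ (by positivity)]
        nlinarith
      linarith

theorem sum_le_of_le_sq_div_of_le_sqrt {P : ℝ} (hP : 0 ≤ P) {u : ℕ → ℝ}
    (hu_sq : ∀ i, u i ≤ P ^ 2 / 2 ^ i) (hu_sqrt : ∀ i, u i ≤ √(2 * P * 2 ^ i)) (K : ℕ) :
    ∑ i ∈ range K, u i ≤ 7 * P := by
  rcases le_total P (2 ^ K) with hK | hK
  · exact (sum_le_of_le_sq_div_of_le_sqrt_of_le hP hu_sq hu_sqrt hK).trans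
      (sub_le_self _ (by positivity))
  · have amgm : √(P * 2 ^ K) ≤ (P + 2 ^ K) / 2 := sqrt_mul_le_add_div_two hP (by positivity)
    linarith [sum_le_mul_sqrt_of_le_sqrt hu_sqrt K]

theorem two_pow_mul_two_mul_two_pow {i K : ℕ} (hi : i < K) :
    2 ^ (K - 1 - i) * (2 * 2 ^ i) = 2 ^ K := by
  rw [← pow_succ', ← pow_add]
  congr 1
  omega

theorem multiscaleVariation_le_of_eq_zero_or_one {f : ℕ × ℕ → ℝ} (hf : ∀ p, f p = 0 ∨ f p = 1)
    (K : ℕ) : multiscaleVariation K f ≤ 7 * gridVariation f (2 ^ K) := by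
  let P := gridVariation f (2 ^ K)
  have hP : 0 ≤ P := gridVariation_nonneg f _
  let u i := min (P ^ 2 / 2 ^ i) √(2 * P * 2 ^ i)
  calc multiscaleVariation K f ≤ ∑ i ∈ range K, u i := by
        refine sum_le_sum fun i hi => ?_
        have block := two_pow_mul_two_mul_two_pow (mem_range.1 hi)
        have le_sq := sum_rademacherAverage_blockDifference_le_sq hf (2 ^ (K - 1 - i)) (2 ^ i)
        have le_sqrt := sum_rademacherAverage_blockDifference_le_sqrt hf (2 ^ (K - 1 - i)) (2 ^ i)
        rw [block] at le_sq le_sqrt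
        push_cast at le_sqrt
        rw [inv_mul_eq_div]
        exact le_min (by gcongr) ((div_le_iff₀' (by positivity)).2 le_sqrt)
    _ ≤ 7 * P := sum_le_of_le_sq_div_of_le_sqrt hP (fun i => min_le_left _ _)
        (fun i => min_le_right _ _) K

end Multiscale

section Transfer

variable {X E Ω : Type*} [NormedAddCommGroup E] [MeasurableSpace Ω]

/-- The differences of the functions `G x` on `Ω` represent the differences of the vectors
`h x`: `‖h x - h y‖` is at least the `L₁`-norm of `G x - G y`, while signed sums of differences of
`h` are at most the `L₁`-norms of the corresponding signed sums for `G`. Such a representation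
transfers inequalities between Rademacher averages and variations from real functions to `h`. Only
differences are required to be integrable, so that `G x` may be the indicator of a half-line. -/
structure RepresentsDifferences (G : X → Ω → ℝ) (h : X → E) (ν : Measure Ω) : Prop where
  integrable_sub : ∀ x y, Integrable (fun ω => G x ω - G y ω) ν
  integral_norm_sub_le : ∀ x y, ∫ ω, ‖G x ω - G y ω‖ ∂ν ≤ ‖h x - h y‖
  norm_sum_le : ∀ {ι : Type} [Fintype ι] (ε : ι → ℤˣ) (x y : ι → X),
    ‖∑ i, ε i • (h (x i) - h (y i))‖ ≤ ∫ ω, ‖∑ i, ε i • (G (x i) ω - G (y i) ω)‖ ∂ν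

variable {ν : Measure Ω}

theorem integrable_sign_smul {φ : Ω → ℝ} (hφ : Integrable φ ν) (ε : ℤˣ) :
    Integrable (fun ω => ε • φ ω) ν := by
  simpa only [Units.smul_def, zsmul_eq_mul] using hφ.const_mul _

theorem integrable_norm_sum_sign_smul {ι : Type*} [Fintype ι] {y : Ω → ι → ℝ}
    (hy : ∀ i, Integrable (fun ω => y ω i) ν) (ε : ι → ℤˣ) :
    Integrable (fun ω => ‖∑ i, ε i • y ω i‖) ν :=
  (integrable_finsetSum _ fun i _ => integrable_sign_smul (hy i) (ε i)).norm

theorem integrable_rademacherAverage {ι : Type*} [Fintype ι] [DecidableEq ι] {y : Ω → ι → ℝ}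
    (hy : ∀ i, Integrable (fun ω => y ω i) ν) :
    Integrable (fun ω => rademacherAverage (y ω)) ν := by
  simp only [rademacherAverage, Fintype.expect_eq_sum_div_card]
  exact (integrable_finsetSum _ fun ε _ => integrable_norm_sum_sign_smul hy ε).div_const _

theorem integral_rademacherAverage {ι : Type*} [Fintype ι] [DecidableEq ι] {y : Ω → ι → ℝ}
    (hy : ∀ i, Integrable (fun ω => y ω i) ν) :
    ∫ ω, rademacherAverage (y ω) ∂ν = 𝔼 ε : ι → ℤˣ, ∫ ω, ‖∑ i, ε i • y ω i‖ ∂ν := by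
  simp only [rademacherAverage, Fintype.expect_eq_sum_div_card]
  rw [integral_div, integral_finsetSum _ fun ε _ => integrable_norm_sum_sign_smul hy ε]

namespace RepresentsDifferences

theorem rademacherAverage_le {G : X → Ω → ℝ} {h : X → E} (hG : RepresentsDifferences G h ν)
    {ι : Type} [Fintype ι] [DecidableEq ι] (x y : ι → X) :
    rademacherAverage (fun i => h (x i) - h (y i)) ≤
      ∫ ω, rademacherAverage (fun i => G (x i) ω - G (y i) ω) ∂ν := by
  rw [integral_rademacherAverage fun i => hG.integrable_sub (x i) (y i)]
  exact expect_le_expect fun ε _ => hG.norm_sum_le ε x y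

variable {G : ℕ × ℕ → Ω → ℝ} {h : ℕ × ℕ → E} (hG : RepresentsDifferences G h ν)
include hG

theorem integrable_rademacherAverage_blockDifference (M H : ℕ) (p : ℕ × ℕ) :
    Integrable (fun ω => rademacherAverage (blockDifference (fun z => G z ω) M H p)) ν :=
  integrable_rademacherAverage fun _ => hG.integrable_sub _ _

theorem integrable_multiscaleVariation (K : ℕ) :
    Integrable (fun ω => multiscaleVariation K fun p => G p ω) ν :=
  integrable_finsetSum _ fun _ _ => (integrable_finsetSum _ fun _ _ =>
    hG.integrable_rademacherAverage_blockDifference _ _ _).const_mul _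

theorem multiscaleVariation_le (K : ℕ) :
    multiscaleVariation K h ≤ ∫ ω, multiscaleVariation K (fun p => G p ω) ∂ν := by
  have integrable := hG.integrable_rademacherAverage_blockDifference
  simp only [multiscaleVariation]
  rw [integral_finsetSum _ fun i _ => (integrable_finsetSum _ fun p _ =>
    integrable _ _ p).const_mul _]
  refine sum_le_sum fun i _ => ?_
  rw [integral_const_mul, integral_finsetSum _ fun p _ => integrable _ _ p]
  gcongr
  exact hG.rademacherAverage_le _ _

theorem integrable_gridVariation (n : ℕ) :
    Integrable (fun ω => gridVariation (fun p => G p ω) n) ν :=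
  integrable_finsetSum _ fun _ _ =>
    (hG.integrable_sub _ _).norm.add (hG.integrable_sub _ _).norm

theorem integral_gridVariation_le (n : ℕ) :
    ∫ ω, gridVariation (fun p => G p ω) n ∂ν ≤ gridVariation h n := by
  have integrable p q := (hG.integrable_sub p q).norm
  simp only [gridVariation]
  rw [integral_finsetSum _ fun p _ => by exact (integrable _ p).add (integrable _ p)]
  refine sum_le_sum fun p _ => ?_
  rw [integral_add (integrable _ p) (integrable _ p)]
  exact add_le_add (hG.integral_norm_sub_le _ p) (hG.integral_norm_sub_le _ p)

theorem multiscaleVariation_le_gridVariation {C : ℝ} {K : ℕ} (hC : 0 ≤ C)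
    (hK : ∀ ω, multiscaleVariation K (fun p => G p ω) ≤
      C * gridVariation (fun p => G p ω) (2 ^ K)) :
    multiscaleVariation K h ≤ C * gridVariation h (2 ^ K) :=
  calc multiscaleVariation K h ≤ ∫ ω, multiscaleVariation K (fun p => G p ω) ∂ν :=
        hG.multiscaleVariation_le K
    _ ≤ ∫ ω, C * gridVariation (fun p => G p ω) (2 ^ K) ∂ν :=
        integral_mono (hG.integrable_multiscaleVariation K)
          ((hG.integrable_gridVariation _).const_mul C) hK
    _ ≤ C * gridVariation h (2 ^ K) := by
        rw [integral_const_mul]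
        exact mul_le_mul_of_nonneg_left (hG.integral_gridVariation_le _) hC

end RepresentsDifferences

theorem indicator_Iio_sub_indicator_Iio {a b : ℝ} (hab : b ≤ a) (t : ℝ) :
    (Set.Iio a).indicator 1 t - (Set.Iio b).indicator 1 t =
      (Set.Ico b a).indicator (1 : ℝ → ℝ) t := by
  rw [← Set.Iio_sdiff_Iio, Set.indicator_sdiff (Set.Iio_subset_Iio hab), Pi.sub_apply]

theorem integrable_indicator_Iio_sub (a b : ℝ) :
    Integrable fun t => (Set.Iio a).indicator 1 t - (Set.Iio b).indicator (1 : ℝ → ℝ) t := by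
  wlog hab : b ≤ a generalizing a b
  · simpa only [Pi.neg_def, neg_sub] using (this b a (le_of_not_ge hab)).neg
  simp only [indicator_Iio_sub_indicator_Iio hab]
  exact (integrable_indicator_iff measurableSet_Ico).2 (integrableOn_const (by simp))

theorem integral_indicator_Iio_sub (a b : ℝ) :
    ∫ t, ((Set.Iio a).indicator 1 t - (Set.Iio b).indicator (1 : ℝ → ℝ) t) = a - b := by
  wlog hab : b ≤ a generalizing a b
  · rw [← neg_sub b a, ← this b a (le_of_not_ge hab), ← integral_neg]
    simp only [neg_sub]
  simp only [indicator_Iio_sub_indicator_Iio hab]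
  rw [integral_indicator_one measurableSet_Ico]
  simp [hab]

theorem integral_norm_indicator_Iio_sub (a b : ℝ) :
    ∫ t, ‖(Set.Iio a).indicator 1 t - (Set.Iio b).indicator (1 : ℝ → ℝ) t‖ = |a - b| := by
  wlog hab : b ≤ a generalizing a b
  · rw [abs_sub_comm, ← this b a (le_of_not_ge hab)]
    simp only [norm_sub_rev]
  rw [abs_of_nonneg (sub_nonneg.2 hab), ← integral_indicator_Iio_sub]
  simp only [indicator_Iio_sub_indicator_Iio hab, Real.norm_eq_abs]
  refine integral_congr_ae (.of_forall fun t => abs_of_nonneg ?_)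
  exact Set.indicator_nonneg (fun _ _ => zero_le_one) t

theorem representsDifferences_indicator_Iio (h : X → ℝ) :
    RepresentsDifferences (fun x => (Set.Iio (h x)).indicator 1) h volume where
  integrable_sub x y := integrable_indicator_Iio_sub (h x) (h y)
  integral_norm_sub_le x y := (integral_norm_indicator_Iio_sub (h x) (h y)).le
  norm_sum_le ε x y := by
    refine le_of_eq_of_le (congrArg norm ?_) (norm_integral_le_integral_norm _)
    rw [integral_finsetSum _ fun i _ =>
      integrable_sign_smul (integrable_indicator_Iio_sub (h (x i)) (h (y i))) (ε i)]
    simp only [Units.smul_def, zsmul_eq_mul, integral_const_mul, integral_indicator_Iio_sub]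

theorem coeFn_sum_sign_smul_sub {ι : Type*} [Fintype ι] (ε : ι → ℤˣ) (f g : ι → Lp ℝ 1 ν) :
    ⇑(∑ i, ε i • (f i - g i)) =ᵐ[ν] fun ω => ∑ i, ε i • (f i ω - g i ω) := by
  have term (i : ι) : ⇑(ε i • (f i - g i)) =ᵐ[ν] fun ω => ε i • (f i ω - g i ω) := by
    simp only [Units.smul_def, ← Int.cast_smul_eq_zsmul ℝ]
    filter_upwards [Lp.coeFn_smul ((ε i : ℤ) : ℝ) (f i - g i), Lp.coeFn_sub (f i) (g i)]
      with ω smul_eq sub_eq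
    rw [smul_eq, Pi.smul_apply, sub_eq, Pi.sub_apply]
  filter_upwards [Lp.coeFn_finsetSum univ fun i => ε i • (f i - g i), ae_all_iff.2 term]
    with ω sum_eq term_eq
  simp only [sum_eq, Finset.sum_apply, term_eq]

theorem representsDifferences_coeFn (h : X → Lp ℝ 1 ν) :
    RepresentsDifferences (fun x => ⇑(h x)) h ν where
  integrable_sub x y := (L1.integrable_coeFn (h x)).sub (L1.integrable_coeFn (h y))
  integral_norm_sub_le x y := by
    rw [L1.norm_eq_integral_norm]
    exact (integral_congr_ae ((Lp.coeFn_sub (h x) (h y)).fun_comp norm)).ge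
  norm_sum_le ε x y := by
    rw [L1.norm_eq_integral_norm]
    exact (integral_congr_ae ((coeFn_sum_sign_smul_sub ε (fun i => h (x i))
      fun i => h (y i)).fun_comp norm)).le

theorem multiscaleVariation_real_le (K : ℕ) (h : ℕ × ℕ → ℝ) :
    multiscaleVariation K h ≤ 7 * gridVariation h (2 ^ K) := by
  refine (representsDifferences_indicator_Iio h).multiscaleVariation_le_gridVariation (by norm_num)
    fun t => multiscaleVariation_le_of_eq_zero_or_one (fun p => ?_) K
  exact Set.indicator_eq_zero_or_self (Set.Iio (h p)) 1 t

theorem multiscaleVariation_le_gridVariation (K : ℕ) (h : ℕ × ℕ → Lp ℝ 1 ν) :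
    multiscaleVariation K h ≤ 7 * gridVariation h (2 ^ K) :=
  (representsDifferences_coeFn h).multiscaleVariation_le_gridVariation (by norm_num)
    fun _ => multiscaleVariation_real_le K _

end Transfer

section BoxMean

variable {V : Type*} [Fintype V]

/-- The multiset in which each `v` has multiplicity `u v < L`: a point of the box `[0, L)^V`. -/
def boxMultiset {L : ℕ} (u : V → Fin L) : Multiset V := ∑ v, (u v : ℕ) • {v}

theorem card_boxMultiset_le {L : ℕ} (u : V → Fin L) :
    (boxMultiset u).card ≤ Fintype.card V * L := by
  simp only [boxMultiset, Multiset.card_sum, Multiset.card_nsmul, Multiset.card_singleton, mul_one]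
  exact (sum_le_card_nsmul _ _ _ fun v _ => (u v).2.le).trans_eq (by simp)

theorem norm_inv_card_smul_sum_le {ι E : Type*} [Fintype ι] [NormedAddCommGroup E]
    [NormedSpace ℝ E] {f : ι → E} {B : ℝ} (hB : 0 ≤ B) (hf : ∀ i, ‖f i‖ ≤ B) :
    ‖(Fintype.card ι : ℝ)⁻¹ • ∑ i, f i‖ ≤ B := by
  rw [norm_smul, norm_inv, Real.norm_natCast]
  refine inv_mul_le_of_le_mul₀ (Nat.cast_nonneg _) hB ?_
  exact (norm_sum_le_of_le _ fun i _ => hf i).trans_eq (by simp)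

variable [DecidableEq V] {E : Type*} [NormedAddCommGroup E] [NormedSpace ℝ E] {L : ℕ}

/-- The mean of `φ` over the multisets all of whose multiplicities are less than `L`. It is not
written with `Finset.expect`, which would ask for a `ℚ≥0`-module structure on `E`. -/
noncomputable def boxMean (L : ℕ) (φ : Multiset V → E) : E :=
  (Fintype.card (V → Fin L) : ℝ)⁻¹ • ∑ u : V → Fin L, φ (boxMultiset u)

theorem boxMean_sub (φ ψ : Multiset V → E) :
    boxMean L (fun z => φ z - ψ z) = boxMean L φ - boxMean L ψ := by
  rw [boxMean, sum_sub_distrib, smul_sub, boxMean, boxMean]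

theorem boxMean_sum {ι : Type*} (t : Finset ι) (φ : ι → Multiset V → E) :
    boxMean L (fun z => ∑ i ∈ t, φ i z) = ∑ i ∈ t, boxMean L (φ i) := by
  simp only [boxMean, sum_comm (t := t), smul_sum]

theorem boxMean_const (hL : 0 < L) (c : E) : boxMean L (fun _ : Multiset V => c) = c := by
  have : NeZero L := ⟨hL.ne'⟩
  rw [boxMean, sum_const, card_univ, ← Nat.cast_smul_eq_nsmul ℝ, smul_smul,
    inv_mul_cancel₀ (Nat.cast_ne_zero.2 Fintype.card_ne_zero), one_smul]

theorem boxMean_const_mul (c : ℝ) (φ : Multiset V → ℝ) :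
    boxMean L (fun z => c * φ z) = c * boxMean L φ := by
  simp only [boxMean, ← mul_sum, smul_eq_mul, mul_left_comm]

theorem boxMean_mono {φ ψ : Multiset V → ℝ}
    (h : ∀ z : Multiset V, z.card ≤ Fintype.card V * L → φ z ≤ ψ z) :
    boxMean L φ ≤ boxMean L ψ := by
  simp only [boxMean, smul_eq_mul]
  gcongr with u
  exact h _ (card_boxMultiset_le u)

theorem norm_boxMean_le {φ : Multiset V → E} {B : ℝ} (hB : 0 ≤ B)
    (h : ∀ z : Multiset V, z.card ≤ Fintype.card V * L → ‖φ z‖ ≤ B) : ‖boxMean L φ‖ ≤ B :=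
  norm_inv_card_smul_sum_le hB fun u => h _ (card_boxMultiset_le u)

theorem boxMultiset_funSplitAt_symm (v : V) (i : Fin L) (w : {j // j ≠ v} → Fin L) :
    boxMultiset ((Equiv.funSplitAt v (Fin L)).symm (i, w)) =
      (i : ℕ) • {v} + (boxMultiset w).map Subtype.val := by
  have map_eq : (boxMultiset w).map Subtype.val = ∑ j : {j // j ≠ v}, (w j : ℕ) • {j.1} :=
    (map_sum (Multiset.mapAddMonoidHom Subtype.val) _ _).trans (by simp [Multiset.map_nsmul])
  rw [map_eq, boxMultiset, Fintype.sum_eq_add_sum_subtype_ne _ v]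
  congr 1
  · simp
  · exact sum_congr rfl fun j _ => by simp [j.2]

theorem boxMean_eq_mean_sum_range (φ : Multiset V → E) (v : V) :
    boxMean L φ = (Fintype.card ({j // j ≠ v} → Fin L) : ℝ)⁻¹ • ∑ w : {j // j ≠ v} → Fin L,
      (L : ℝ)⁻¹ • ∑ i ∈ range L, φ (i • {v} + (boxMultiset w).map Subtype.val) := by
  have card_eq : Fintype.card (V → Fin L) = L * Fintype.card ({j // j ≠ v} → Fin L) := by
    rw [Fintype.card_congr (Equiv.funSplitAt v (Fin L)), Fintype.card_prod, Fintype.card_fin]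
  simp only [boxMean, ← smul_sum, smul_smul, sum_range]
  rw [card_eq, Nat.cast_mul, mul_inv_rev, ← (Equiv.funSplitAt v (Fin L)).symm.sum_comp,
    Fintype.sum_prod_type_right]
  simp only [boxMultiset_funSplitAt_symm]

theorem norm_boxMean_cons_sub_le (hL : 0 < L) {φ : Multiset V → E} {B : ℝ} (hB : 0 ≤ B) (v : V)
    (h : ∀ z : Multiset V, z.card ≤ Fintype.card V * L → ‖φ z‖ ≤ B) :
    ‖boxMean L (fun z => φ (v ::ₘ z)) - boxMean L φ‖ ≤ 2 * B / L := by
  have card_eq : Fintype.card V = Fintype.card {j // j ≠ v} + 1 := by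
    rw [← Fintype.card_option, Fintype.card_congr (Equiv.optionSubtypeNe v)]
  rw [← boxMean_sub, boxMean_eq_mean_sum_range _ v]
  refine norm_inv_card_smul_sum_le (by positivity) fun w => ?_
  let ψ (i : ℕ) : E := φ (i • {v} + (boxMultiset w).map Subtype.val)
  have hψ {i : ℕ} (hi : i ≤ L) : ‖ψ i‖ ≤ B := h _ <| by
    rw [Multiset.card_add, Multiset.card_map, Multiset.card_nsmul, Multiset.card_singleton,
      card_eq, add_one_mul]
    linarith [card_boxMultiset_le w]
  have telescope : ∑ i ∈ range L, (φ (v ::ₘ (i • {v} + (boxMultiset w).map Subtype.val)) - ψ i) =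
      ψ L - ψ 0 := by
    rw [← sum_range_sub]
    simp only [ψ, succ_nsmul', ← Multiset.singleton_add, add_assoc]
  rw [telescope, norm_smul, norm_inv, Real.norm_natCast, inv_mul_eq_div]
  gcongr
  linarith [norm_sub_le (ψ L) (ψ 0), hψ le_rfl, hψ (Nat.zero_le L)]

theorem norm_boxMean_add_sub_le (hL : 0 < L) {φ : Multiset V → E} {B : ℝ} (hB : 0 ≤ B)
    (y : Multiset V)
    (h : ∀ z : Multiset V, z.card ≤ Fintype.card V * L + y.card → ‖φ z‖ ≤ B) :
    ‖boxMean L (fun z => φ (z + y)) - boxMean L φ‖ ≤ y.card * (2 * B / L) := by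
  induction y using Multiset.induction_on with
  | empty => simp
  | cons v y ih =>
    rw [Multiset.card_cons] at h ⊢
    have shift_y := ih fun z hz => h z (by omega)
    have shift_v := norm_boxMean_cons_sub_le hL (φ := fun z => φ (z + y)) hB v fun z hz =>
      h _ (by rw [Multiset.card_add]; omega)
    simp only [Multiset.cons_add, ← Multiset.add_cons] at shift_v
    push_cast
    linarith [norm_sub_le_norm_sub_add_norm_sub (boxMean L fun z => φ (z + v ::ₘ y))
      (boxMean L fun z => φ (z + y)) (boxMean L φ)]

end BoxMean

section Smoothing

variable {V E : Type*} [NormedAddCommGroup E]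

/-- Inserting one point into a multiset with fewer than `s` points moves `g` by at most `b`. -/
def InsertLipschitz (g : Multiset V → E) (s : ℕ) (b : ℝ) : Prop :=
  ∀ (n : Multiset V) (v : V), n.card < s → ‖g (v ::ₘ n) - g n‖ ≤ b

theorem InsertLipschitz.norm_add_sub_le {g : Multiset V → E} {s : ℕ} {b : ℝ}
    (hg : InsertLipschitz g s b) (n y : Multiset V) (h : n.card + y.card ≤ s) :
    ‖g (y + n) - g n‖ ≤ y.card * b := by
  induction y using Multiset.induction_on with
  | empty => simp
  | cons v y ih =>
    rw [Multiset.card_cons] at h ⊢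
    have step := hg (y + n) v (by rw [Multiset.card_add]; omega)
    rw [Multiset.cons_add]
    push_cast
    linarith [norm_sub_le_norm_sub_add_norm_sub (g (v ::ₘ (y + n))) (g (y + n)) (g n),
      ih (by omega)]

theorem norm_nsmul_add_sub_nsmul_add_le_sum (f : Multiset V → E) (S S' x : Multiset V) (T : ℕ) :
    ‖f (T • S + x) - f (T • S' + x)‖ ≤
      ∑ t ∈ range T, ‖f (S + (x + (t • S + (T - 1 - t) • S'))) -
        f (S' + (x + (t • S + (T - 1 - t) • S')))‖ := by
  have telescope := sum_range_sub (fun t => f (t • S + (T - t) • S' + x)) T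
  simp only [Nat.sub_self, zero_smul, add_zero, zero_add, Nat.sub_zero] at telescope
  rw [← telescope]
  refine (norm_sum_le _ _).trans_eq (sum_congr rfl fun t ht => ?_)
  rw [mem_range] at ht
  congr 3
  · rw [show T - (t + 1) = T - 1 - t by omega, succ_nsmul]
    abel
  · rw [show T - t = T - 1 - t + 1 by omega, succ_nsmul]
    abel

variable [Fintype V] [DecidableEq V] [NormedSpace ℝ E]

/-- The mean of the translates of `g` by the multisets with multiplicities less than `L`. -/
noncomputable def smooth (L : ℕ) (g : Multiset V → E) (x : Multiset V) : E :=
  boxMean L fun u => g (u + x)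

/-- The discrete derivative of `smooth L g` at `x` in the direction `v`. -/
noncomputable def smoothDeriv (L : ℕ) (g : Multiset V → E) (x : Multiset V) (v : V) : E :=
  smooth L g (v ::ₘ x) - smooth L g x

variable {g : Multiset V → E} {s L : ℕ} {b : ℝ} (hg : InsertLipschitz g s b) (hb : 0 ≤ b)
include hg hb

theorem InsertLipschitz.smooth : InsertLipschitz (smooth L g) (s - Fintype.card V * L) b := by
  intro n v hn
  rw [_root_.smooth, _root_.smooth, ← boxMean_sub]
  refine norm_boxMean_le hb fun z hz => ?_
  rw [Multiset.add_cons]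
  exact hg _ v (by rw [Multiset.card_add]; omega)

theorem norm_smooth_sub_le (hL : 0 < L) (n : Multiset V) (h : Fintype.card V * L + n.card ≤ s) :
    ‖smooth L g n - g n‖ ≤ Fintype.card V * L * b := by
  rw [smooth, ← boxMean_const (V := V) hL (g n), ← boxMean_sub]
  refine norm_boxMean_le (by positivity) fun z hz => ?_
  refine (hg.norm_add_sub_le n z (by omega)).trans ?_
  gcongr
  exact_mod_cast hz

theorem norm_smoothDeriv_add_sub_le (hL : 0 < L) (n y : Multiset V) (v : V)
    (h : Fintype.card V * L + n.card + y.card < s) :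
    ‖smoothDeriv L g (y + n) v - smoothDeriv L g n v‖ ≤ y.card * (2 * b / L) := by
  have shift := norm_boxMean_add_sub_le hL (φ := fun u => g (v ::ₘ (u + n)) - g (u + n)) hb y
    fun z hz => hg _ _ (by rw [Multiset.card_add]; omega)
  simpa only [boxMean_sub, smoothDeriv, smooth, Multiset.add_cons, add_assoc] using shift

theorem norm_smooth_add_sub_sub_sum_smoothDeriv_le (hL : 0 < L) (n y : Multiset V)
    (h : Fintype.card V * L + n.card + y.card ≤ s) :
    ‖smooth L g (y + n) - smooth L g n - (y.map (smoothDeriv L g n)).sum‖ ≤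
      y.card * (y.card * (2 * b / L)) := by
  induction y using Multiset.induction_on with
  | empty => simp
  | cons v y ih =>
    rw [Multiset.card_cons] at h
    rw [Multiset.map_cons, Multiset.sum_cons, Multiset.card_cons, Multiset.cons_add]
    have last := norm_smoothDeriv_add_sub_le hg hb hL n y v (by omega)
    have split : smooth L g (v ::ₘ (y + n)) - smooth L g n -
        (smoothDeriv L g n v + (y.map (smoothDeriv L g n)).sum) =
        (smoothDeriv L g (y + n) v - smoothDeriv L g n v) +
        (smooth L g (y + n) - smooth L g n - (y.map (smoothDeriv L g n)).sum) := by
      simp only [smoothDeriv]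
      abel
    rw [split]
    refine (norm_add_le_of_le last (ih (by omega))).trans ?_
    have : 0 ≤ 2 * b / L := by positivity
    push_cast
    nlinarith [(y.card).cast_nonneg (α := ℝ)]

theorem norm_smooth_add_sub_smooth_add_le {S S' : Multiset V} {q : ℕ} (hS : S.card = q)
    (hS' : S'.card = q) (x : Multiset V) (h : Fintype.card V * L + x.card + q ≤ s) :
    ‖smooth L g (S + x) - smooth L g (S' + x)‖ ≤ 2 * q * b := by
  have near {y : Multiset V} (hy : y.card = q) : ‖smooth L g (y + x) - smooth L g x‖ ≤ q * b :=
    hy ▸ (hg.smooth hb).norm_add_sub_le x y (by omega)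
  have near_S := near hS
  have near_S' := near hS'
  rw [norm_sub_rev] at near_S'
  linarith [norm_sub_le_norm_sub_add_norm_sub (smooth L g (S + x)) (smooth L g x)
    (smooth L g (S' + x))]

theorem norm_smooth_add_sub_smooth_add_le_norm_sum_smoothDeriv_sub (hL : 0 < L)
    {S S' : Multiset V} {q : ℕ} (hS : S.card = q) (hS' : S'.card = q) (x : Multiset V)
    (h : Fintype.card V * L + x.card + q ≤ s) :
    ‖smooth L g (S + x) - smooth L g (S' + x)‖ ≤
      ‖(S.map (smoothDeriv L g x)).sum - (S'.map (smoothDeriv L g x)).sum‖ +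
        2 * (q * (q * (2 * b / L))) := by
  let error (y : Multiset V) : E :=
    smooth L g (y + x) - smooth L g x - (y.map (smoothDeriv L g x)).sum
  have error_le {y : Multiset V} (hy : y.card = q) : ‖error y‖ ≤ q * (q * (2 * b / L)) :=
    hy ▸ norm_smooth_add_sub_sub_sum_smoothDeriv_le hg hb hL x y (by omega)
  have split : smooth L g (S + x) - smooth L g (S' + x) =
      ((S.map (smoothDeriv L g x)).sum - (S'.map (smoothDeriv L g x)).sum) +
        (error S - error S') := by
    simp only [error]
    abel
  rw [split]
  refine norm_add_le_of_le le_rfl ?_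
  linarith [norm_sub_le (error S) (error S'), error_le hS, error_le hS']

theorem norm_sub_sub_le_norm_smooth_sub_smooth (hL : 0 < L) {x y : Multiset V}
    (hx : Fintype.card V * L + x.card ≤ s) (hy : Fintype.card V * L + y.card ≤ s) :
    ‖g x - g y‖ - 2 * (Fintype.card V * L * b) ≤ ‖smooth L g x - smooth L g y‖ := by
  have near_x := norm_smooth_sub_le hg hb hL x hx
  have near_y := norm_smooth_sub_le hg hb hL y hy
  rw [norm_sub_rev] at near_x
  linarith [norm_sub_le_norm_sub_add_norm_sub (g x) (smooth L g x) (g y),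
    norm_sub_le_norm_sub_add_norm_sub (smooth L g x) (smooth L g y) (g y)]

theorem boxMean_norm_smooth_sub_add_le {R q : ℕ} (hR : 0 < R) {S S' y : Multiset V}
    (hS : S.card = q) (hS' : S'.card = q)
    (hs : Fintype.card V * R + Fintype.card V * L + y.card + q ≤ s) :
    boxMean R (fun x => ‖smooth L g (S + (x + y)) - smooth L g (S' + (x + y))‖) ≤
      boxMean R (fun x => ‖smooth L g (S + x) - smooth L g (S' + x)‖) +
        y.card * (2 * (2 * q * b) / R) := by
  have near := norm_boxMean_add_sub_le hR (B := 2 * q * b)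
    (φ := fun x => ‖smooth L g (S + x) - smooth L g (S' + x)‖) (by positivity) y fun z hz => by
      rw [norm_norm]
      exact norm_smooth_add_sub_smooth_add_le hg hb hS hS' z (by omega)
  linarith [(Real.le_norm_self _).trans near]

theorem sub_le_mul_boxMean_norm_smooth_sub (hL : 0 < L) {R T q : ℕ} (hR : 0 < R)
    {S S' : Multiset V} (hS : S.card = q) (hS' : S'.card = q) {low : ℝ}
    (hs : Fintype.card V * R + Fintype.card V * L + (T + 1) * q ≤ s)
    (hlow : ∀ n : Multiset V, n.card + T * q ≤ s → low ≤ ‖g (T • S + n) - g (T • S' + n)‖) :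
    low - 2 * (Fintype.card V * L * b) ≤
      T * (boxMean R (fun x => ‖smooth L g (S + x) - smooth L g (S' + x)‖) +
        T * q * (2 * (2 * q * b) / R)) := by
  set φ : Multiset V → ℝ := fun x => ‖smooth L g (S + x) - smooth L g (S' + x)‖
  let between (t : ℕ) : Multiset V := t • S + (T - 1 - t) • S'
  rw [add_one_mul] at hs
  have card_between_le {t : ℕ} (ht : t ∈ range T) : (between t).card ≤ T * q := by
    rw [Multiset.card_add, Multiset.card_nsmul, Multiset.card_nsmul, hS, hS', ← add_mul]
    exact Nat.mul_le_mul_right _ (by rw [mem_range] at ht; omega)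
  have le_sum (x : Multiset V) (hx : x.card ≤ Fintype.card V * R) :
      low - 2 * (Fintype.card V * L * b) ≤ ∑ t ∈ range T, φ (x + between t) := by
    refine le_trans ?_ (norm_nsmul_add_sub_nsmul_add_le_sum (smooth L g) S S' x T)
    have card_eq {y : Multiset V} (hy : y.card = q) : (T • y + x).card = T * q + x.card := by
      rw [Multiset.card_add, Multiset.card_nsmul, hy]
    have := norm_sub_sub_le_norm_smooth_sub_smooth hg hb hL (x := T • S + x) (y := T • S' + x)
      (by rw [card_eq hS]; omega) (by rw [card_eq hS']; omega)
    linarith [hlow x (by omega)]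
  have shift {t : ℕ} (ht : t ∈ range T) :
      boxMean R (fun x => φ (x + between t)) ≤ boxMean R φ + T * q * (2 * (2 * q * b) / R) := by
    have card_le := card_between_le ht
    refine (boxMean_norm_smooth_sub_add_le hg hb hR hS hS' (by omega)).trans ?_
    gcongr
    exact_mod_cast card_le
  calc low - 2 * (Fintype.card V * L * b)
      ≤ boxMean R (fun x => ∑ t ∈ range T, φ (x + between t)) := by
        rw [← boxMean_const (V := V) hR (low - 2 * (Fintype.card V * L * b))]
        exact boxMean_mono le_sum
    _ = ∑ t ∈ range T, boxMean R (fun x => φ (x + between t)) := boxMean_sum _ _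
    _ ≤ _ := (sum_le_card_nsmul _ _ _ fun t ht => shift ht).trans_eq (by simp [mul_add])

theorem sub_le_boxMean_norm_sum_smoothDeriv_sub (hL : 0 < L) {R T q : ℕ} (hR : 0 < R)
    (hT : 0 < T) {S S' : Multiset V} (hS : S.card = q) (hS' : S'.card = q) {low : ℝ}
    (hs : Fintype.card V * R + Fintype.card V * L + (T + 1) * q ≤ s)
    (hlow : ∀ n : Multiset V, n.card + T * q ≤ s → low ≤ ‖g (T • S + n) - g (T • S' + n)‖) :
    low / T - 2 * (Fintype.card V * L * b) / T - T * q * (2 * (2 * q * b) / R) -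
        2 * (q * (q * (2 * b / L))) ≤
      boxMean R (fun x =>
        ‖(S.map (smoothDeriv L g x)).sum - (S'.map (smoothDeriv L g x)).sum‖) := by
  have average := sub_le_mul_boxMean_norm_smooth_sub hg hb hL hR hS hS' hs hlow
  rw [← div_le_iff₀' (by exact_mod_cast hT), sub_div] at average
  have linearise := boxMean_mono (L := R) fun z hz =>
    sub_le_iff_le_add.2 (norm_smooth_add_sub_smooth_add_le_norm_sum_smoothDeriv_sub hg hb hL
      hS hS' z (by rw [add_one_mul] at hs; omega))
  rw [boxMean_sub, boxMean_const hR] at linearise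
  linarith

end Smoothing

section EarthMover

/-- The Euclidean plane. -/
abbrev Plane := EuclideanSpace ℝ (Fin 2)

variable {S T : Finset Plane} {s : ℕ}

theorem emdUnif_le (hS : S.card = s) (hT : T.card = s) {B : ℝ}
    (h : ∀ φ : Plane → ℝ, LipschitzWith 1 φ → |∑ x ∈ S, φ x - ∑ x ∈ T, φ x| ≤ B) :
    emdUnif S T ≤ B / s := by
  refine csSup_le ⟨_, fun _ => 0, LipschitzWith.const' 0, rfl⟩ ?_
  rintro _ ⟨φ, hφ, rfl⟩
  rw [hS, hT, ← sub_div, abs_div, Nat.abs_cast]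
  gcongr
  exact h φ hφ

theorem abs_sum_sub_sum_le_sum_norm (h : S.card = T.card) {φ : Plane → ℝ}
    (hφ : LipschitzWith 1 φ) :
    |∑ x ∈ S, φ x - ∑ x ∈ T, φ x| ≤ ∑ x ∈ S, ‖x‖ + ∑ x ∈ T, ‖x‖ := by
  have centred (U : Finset Plane) : |∑ x ∈ U, (φ x - φ 0)| ≤ ∑ x ∈ U, ‖x‖ :=
    (abs_sum_le_sum_abs _ _).trans <| sum_le_sum fun x _ => by
      simpa [Real.dist_eq] using hφ.dist_le_mul x 0
  have recentre : ∑ x ∈ S, φ x - ∑ x ∈ T, φ x =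
      ∑ x ∈ S, (φ x - φ 0) - ∑ x ∈ T, (φ x - φ 0) := by
    simp only [sum_sub_distrib, sum_const, h]
    ring
  rw [recentre]
  exact (abs_sub _ _).trans (add_le_add (centred S) (centred T))

theorem abs_sum_sub_sum_div_le_emdUnif (hS : S.card = s) (hT : T.card = s) {φ : Plane → ℝ}
    (hφ : LipschitzWith 1 φ) : |∑ x ∈ S, φ x - ∑ x ∈ T, φ x| / s ≤ emdUnif S T := by
  have value_eq (ψ : Plane → ℝ) : |(∑ x ∈ S, ψ x) / S.card - (∑ x ∈ T, ψ x) / T.card| =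
      |∑ x ∈ S, ψ x - ∑ x ∈ T, ψ x| / s := by
    rw [hS, hT, ← sub_div, abs_div, Nat.abs_cast]
  refine le_csSup ⟨(∑ x ∈ S, ‖x‖ + ∑ x ∈ T, ‖x‖) / s, ?_⟩ ⟨φ, hφ, (value_eq φ).symm⟩
  rintro _ ⟨ψ, hψ, rfl⟩
  rw [value_eq]
  gcongr
  exact abs_sum_sub_sum_le_sum_norm (hS.trans hT.symm) hψ

end EarthMover

section Cloud

variable {V : Type*} [DecidableEq V]

theorem toEnumFinset_cons (v : V) (m : Multiset V) :
    (v ::ₘ m).toEnumFinset = insert (v, m.count v) m.toEnumFinset := by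
  ext ⟨w, i⟩
  rcases eq_or_ne w v with rfl | hwv
  · simp [Multiset.count_cons_self, le_iff_eq_or_lt]
  · simp [Multiset.count_cons_of_ne hwv, hwv]

/-- A multiset of sites realised as a set of points of the plane: the `i`-th copy of the site `v`
is placed at `pt (v, i)`. -/
def cloud (pt : V × ℕ ↪ Plane) (m : Multiset V) : Finset Plane := m.toEnumFinset.map pt

variable (pt : V × ℕ ↪ Plane)

theorem card_cloud (m : Multiset V) : (cloud pt m).card = m.card := by
  simp [cloud]

theorem sum_cloud_cons (v : V) (m : Multiset V) (φ : Plane → ℝ) :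
    ∑ z ∈ cloud pt (v ::ₘ m), φ z = φ (pt (v, m.count v)) + ∑ z ∈ cloud pt m, φ z := by
  rw [cloud, toEnumFinset_cons, sum_map, sum_insert (by simp), cloud, sum_map]

variable {pt} {base : V → Plane} {r : ℝ} (hpt : ∀ v i, dist (pt (v, i)) (base v) ≤ r)
include hpt

theorem emdUnif_cloud_cons_cons_le (v w : V) {m : Multiset V} {s : ℕ} (hm : m.card + 1 = s) :
    emdUnif (cloud pt (v ::ₘ m)) (cloud pt (w ::ₘ m)) ≤ (dist (base v) (base w) + 2 * r) / s := by
  have card_eq (u : V) : (cloud pt (u ::ₘ m)).card = s := by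
    rw [card_cloud, Multiset.card_cons, hm]
  refine emdUnif_le (card_eq v) (card_eq w) fun φ hφ => ?_
  rw [sum_cloud_cons, sum_cloud_cons, add_sub_add_right_eq_sub, ← Real.dist_eq]
  calc dist (φ (pt (v, m.count v))) (φ (pt (w, m.count w)))
      ≤ dist (pt (v, m.count v)) (pt (w, m.count w)) := by
        simpa using hφ.dist_le_mul _ _
    _ ≤ dist (pt (v, m.count v)) (base v) + dist (base v) (base w) +
        dist (base w) (pt (w, m.count w)) := dist_triangle4 _ _ _ _
    _ ≤ dist (base v) (base w) + 2 * r := by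
      rw [dist_comm (base w)]
      linarith [hpt v (m.count v), hpt w (m.count w)]

theorem abs_sum_cloud_add_sub_le (m n : Multiset V) {φ : Plane → ℝ} (hφ : LipschitzWith 1 φ) :
    |∑ z ∈ cloud pt (m + n), φ z - ∑ z ∈ cloud pt n, φ z - (m.map fun v => φ (base v)).sum| ≤
      m.card * r := by
  induction m using Multiset.induction_on with
  | empty => simp
  | cons v m ih =>
    rw [Multiset.cons_add, sum_cloud_cons, Multiset.map_cons, Multiset.sum_cons,
      Multiset.card_cons]
    have near := hφ.dist_le_mul (pt (v, (m + n).count v)) (base v)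
    rw [Real.dist_eq, NNReal.coe_one, one_mul] at near
    replace near := near.trans (hpt v _)
    rw [abs_le] at *
    push_cast
    constructor <;> linarith

theorem mul_sub_div_le_emdUnif_cloud {S T n : Multiset V} {k s : ℕ} (hS : S.card = k)
    (hT : T.card = k) (hn : n.card + k = s) {H : ℝ}
    (hST : ∀ v ∈ S, ∀ w ∈ T, H ≤ dist (base v) (base w)) :
    k * (H - 2 * r) / s ≤ emdUnif (cloud pt (S + n)) (cloud pt (T + n)) := by
  have card_eq {m : Multiset V} (hm : m.card = k) : (cloud pt (m + n)).card = s := by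
    rw [card_cloud, Multiset.card_add, hm, ← hn, add_comm]
  let target : Set Plane := {z | ∃ w ∈ T, base w = z}
  let φ (z : Plane) : ℝ := Metric.infDist z target
  have hφ : LipschitzWith 1 φ := Metric.lipschitz_infDist_pt target
  refine le_trans ?_ (abs_sum_sub_sum_div_le_emdUnif (card_eq hS) (card_eq hT) hφ)
  gcongr
  have far_S : k * H ≤ (S.map fun v => φ (base v)).sum := by
    rw [← hS, ← nsmul_eq_mul, ← Multiset.card_map (fun v => φ (base v))]
    refine Multiset.card_nsmul_le_sum fun x hx => ?_
    obtain ⟨v, hv, rfl⟩ := Multiset.mem_map.1 hx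
    obtain ⟨w, hw⟩ := Multiset.card_pos_iff_exists_mem.1
      (hT.trans hS.symm ▸ Multiset.card_pos_iff_exists_mem.2 ⟨v, hv⟩)
    refine (Metric.le_infDist (s := target) ⟨_, w, hw, rfl⟩).2 ?_
    rintro _ ⟨w, hw, rfl⟩
    exact hST v hv w hw
  have zero_on_T : (T.map fun v => φ (base v)).sum = 0 := by
    refine Multiset.sum_eq_zero fun x hx => ?_
    obtain ⟨v, hv, rfl⟩ := Multiset.mem_map.1 hx
    exact Metric.infDist_zero_of_mem ⟨v, hv, rfl⟩
  have near_S := abs_sum_cloud_add_sub_le hpt S n hφ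
  have near_T := abs_sum_cloud_add_sub_le hpt T n hφ
  rw [hS, abs_le] at near_S
  rw [zero_on_T, hT, abs_le] at near_T
  exact le_trans (by linarith) (le_abs_self _)

end Cloud

section Parking

variable {V : Type*} [DecidableEq V] {E : Type*} [NormedAddCommGroup E]

/-- `F` embeds the `s`-point subsets of the plane, with the earth mover's distance, into `E`
without contraction and with expansion at most `D`. -/
def IsEmdEmbedding (F : Finset Plane → E) (s : ℕ) (D : ℝ) : Prop :=
  ∀ S T : Finset Plane, S.card = s → T.card = s →
    emdUnif S T ≤ dist (F S) (F T) ∧ dist (F S) (F T) ≤ D * emdUnif S T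

/-- The value of `F` on the cloud of `n`, filled up to `s` points with copies of the parking
site `v₀`. -/
def parkedValue (F : Finset Plane → E) (pt : V × ℕ ↪ Plane) (s : ℕ) (v₀ : V) (n : Multiset V) : E :=
  F (cloud pt (n + Multiset.replicate (s - n.card) v₀))

variable {F : Finset Plane → E} {pt : V × ℕ ↪ Plane} {base : V → Plane} {r : ℝ} {s : ℕ} {D : ℝ}
  (hF : IsEmdEmbedding F s D) (hpt : ∀ v i, dist (pt (v, i)) (base v) ≤ r)
include hF hpt

theorem norm_cloud_cons_sub_cloud_cons_le (hD : 0 ≤ D) (v w : V) {m : Multiset V}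
    (hm : m.card + 1 = s) :
    ‖F (cloud pt (v ::ₘ m)) - F (cloud pt (w ::ₘ m))‖ ≤
      D * ((dist (base v) (base w) + 2 * r) / s) := by
  have card_eq (u : V) : (cloud pt (u ::ₘ m)).card = s := by
    rw [card_cloud, Multiset.card_cons, hm]
  rw [← dist_eq_norm]
  refine (hF _ _ (card_eq v) (card_eq w)).2.trans ?_
  gcongr
  exact emdUnif_cloud_cons_cons_le hpt v w hm

theorem norm_parkedValue_cons_sub_cons_le (hD : 0 ≤ D) (v₀ v w : V) {n : Multiset V}
    (hn : n.card < s) :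
    ‖parkedValue F pt s v₀ (v ::ₘ n) - parkedValue F pt s v₀ (w ::ₘ n)‖ ≤
      D * ((dist (base v) (base w) + 2 * r) / s) := by
  simp only [parkedValue, Multiset.card_cons, Multiset.cons_add]
  refine norm_cloud_cons_sub_cloud_cons_le hF hpt hD v w ?_
  rw [Multiset.card_add, Multiset.card_replicate]
  omega

theorem insertLipschitz_parkedValue (hD : 0 ≤ D) {v₀ : V} {B : ℝ}
    (hB : ∀ v, dist (base v) (base v₀) ≤ B) :
    InsertLipschitz (parkedValue F pt s v₀) s (D * ((B + 2 * r) / s)) := by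
  intro n v hn
  have parked : n + Multiset.replicate (s - n.card) v₀ =
      v₀ ::ₘ (n + Multiset.replicate (s - (n.card + 1)) v₀) := by
    rw [← Multiset.add_cons, ← Multiset.replicate_succ,
      show s - (n.card + 1) + 1 = s - n.card by omega]
  rw [parkedValue, parkedValue, parked, Multiset.card_cons, Multiset.cons_add]
  refine (norm_cloud_cons_sub_cloud_cons_le hF hpt hD v v₀ ?_).trans ?_
  · rw [Multiset.card_add, Multiset.card_replicate]
    omega
  · gcongr
    exact hB v

theorem le_norm_parkedValue_sub (v₀ : V) {S S' n : Multiset V} {k : ℕ} (hS : S.card = k)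
    (hS' : S'.card = k) (hn : n.card + k ≤ s) {H : ℝ}
    (hSS' : ∀ v ∈ S, ∀ w ∈ S', H ≤ dist (base v) (base w)) :
    k * (H - 2 * r) / s ≤ ‖parkedValue F pt s v₀ (S + n) - parkedValue F pt s v₀ (S' + n)‖ := by
  let rest : Multiset V := n + Multiset.replicate (s - (k + n.card)) v₀
  have card_rest : rest.card + k = s := by
    rw [Multiset.card_add, Multiset.card_replicate]
    omega
  have value_eq {U : Multiset V} (hU : U.card = k) :
      parkedValue F pt s v₀ (U + n) = F (cloud pt (U + rest)) := by
    rw [parkedValue, Multiset.card_add, hU, add_assoc]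
  have card_eq {U : Multiset V} (hU : U.card = k) : (cloud pt (U + rest)).card = s := by
    rw [card_cloud, Multiset.card_add, hU, add_comm, card_rest]
  rw [value_eq hS, value_eq hS', ← dist_eq_norm]
  exact (mul_sub_div_le_emdUnif_cloud hpt hS hS' card_rest hSS').trans
    (hF _ _ (card_eq hS) (card_eq hS')).1

end Parking

section Grid

theorem dist_plane_le (x y : Plane) : dist x y ≤ |x 0 - y 0| + |x 1 - y 1| := by
  rw [EuclideanSpace.dist_eq, Fin.sum_univ_two, Real.sqrt_le_iff, Real.dist_eq, Real.dist_eq]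
  exact ⟨by positivity, by nlinarith [abs_nonneg (x 0 - y 0), abs_nonneg (x 1 - y 1)]⟩

theorem abs_sub_le_dist_plane (x y : Plane) (k : Fin 2) : |x k - y k| ≤ dist x y := by
  rw [dist_eq_norm]
  exact PiLp.norm_apply_le (x - y) k

/-- The sites: the integer points of the square `[0, m]²`. -/
abbrev Site (m : ℕ) := Fin (m + 1) × Fin (m + 1)

variable {m : ℕ}

/-- A site as a point of the plane. -/
noncomputable def gridPoint (v : Site m) : Plane := !₂[((v.1 : ℕ) : ℝ), ((v.2 : ℕ) : ℝ)]

/-- The place of the `i`-th copy of a site: distinct copies are pushed to the right of the site by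
distinct amounts in `(0, 1/8]`. -/
noncomputable def shiftedGridPoint (m : ℕ) : Site m × ℕ ↪ Plane where
  toFun p := !₂[(p.1.1 : ℕ) + (8 * ((p.2 : ℝ) + 1))⁻¹, ((p.1.2 : ℕ) : ℝ)]
  inj' := by
    rintro ⟨v, i⟩ ⟨w, j⟩ h
    have first : ((v.1 : ℕ) : ℝ) + (8 * ((i : ℝ) + 1))⁻¹ = (w.1 : ℕ) + (8 * ((j : ℝ) + 1))⁻¹ := by
      simpa using congrArg (fun z : Plane => z 0) h
    have second : ((v.2 : ℕ) : ℝ) = (w.2 : ℕ) := by simpa using congrArg (fun z : Plane => z 1) h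
    have floor_eq (u : Site m) (k : ℕ) : ⌊((u.1 : ℕ) : ℝ) + (8 * ((k : ℝ) + 1))⁻¹⌋₊ = u.1 := by
      have : (8 * ((k : ℝ) + 1))⁻¹ < 1 :=
        inv_lt_one_of_one_lt₀ (by linarith [k.cast_nonneg (α := ℝ)])
      rw [Nat.floor_eq_iff (by positivity)]
      exact ⟨le_add_of_nonneg_right (by positivity), by linarith⟩
    have v_fst : (v.1 : ℕ) = w.1 := by rw [← floor_eq v i, first, floor_eq]
    rw [v_fst, add_right_inj, inv_inj] at first
    have : (i : ℝ) = j := by linarith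
    exact Prod.ext (Prod.ext (Fin.ext v_fst) (Fin.ext (by exact_mod_cast second)))
      (by exact_mod_cast this)

theorem dist_shiftedGridPoint_le (v : Site m) (i : ℕ) :
    dist (shiftedGridPoint m (v, i)) (gridPoint v) ≤ 1 / 8 := by
  have shift_le : (8 * ((i : ℝ) + 1))⁻¹ ≤ 1 / 8 := by
    rw [one_div]
    exact inv_anti₀ (by norm_num) (by linarith [i.cast_nonneg (α := ℝ)])
  have abs_eq : |(i : ℝ) + 1| = i + 1 := abs_of_nonneg (by positivity)
  refine (dist_plane_le _ _).trans ?_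
  simpa [shiftedGridPoint, gridPoint, abs_eq] using shift_le

theorem dist_gridPoint_zero_le (v : Site m) :
    dist (gridPoint v) (gridPoint (0 : Site m)) ≤ 2 * m := by
  have coord_le (k : Fin (m + 1)) : ((k : ℕ) : ℝ) ≤ m := by exact_mod_cast Fin.is_le k
  refine (dist_plane_le _ _).trans ?_
  simpa [gridPoint, two_mul] using add_le_add (coord_le v.1) (coord_le v.2)

/-- The site at a given position, which is to lie in `[0, m]²`. -/
def site (m : ℕ) (p : ℕ × ℕ) : Site m := (Fin.ofNat _ p.1, Fin.ofNat _ p.2)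

theorem gridPoint_site {p : ℕ × ℕ} (h₁ : p.1 ≤ m) (h₂ : p.2 ≤ m) :
    gridPoint (site m p) = !₂[(p.1 : ℝ), (p.2 : ℝ)] := by
  simp only [gridPoint, site, Fin.val_ofNat, Nat.mod_eq_of_lt (Nat.lt_succ_of_le h₁),
    Nat.mod_eq_of_lt (Nat.lt_succ_of_le h₂)]

theorem dist_gridPoint_add_le {p d : ℕ × ℕ} (h₁ : p.1 + d.1 ≤ m) (h₂ : p.2 + d.2 ≤ m) :
    dist (gridPoint (site m (p + d))) (gridPoint (site m p)) ≤ d.1 + d.2 := by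
  rw [gridPoint_site (p := p + d) h₁ h₂, gridPoint_site (by omega) (by omega)]
  refine (dist_plane_le _ _).trans_eq ?_
  simp

theorem card_site_le (hm : 2 ≤ m) : Fintype.card (Site m) ≤ 4 * m ^ 2 := by
  simp only [Fintype.card_prod, Fintype.card_fin]
  nlinarith

/-- The position `p` of the block `q`, of side `2H`, translated by `(H, 0)` if `ε q = -1`. -/
def blockPoint {M : ℕ} (H : ℕ) (p : ℕ × ℕ) (ε : Fin M × Fin M → ℤˣ) (q : Fin M × Fin M) : ℕ × ℕ :=
  blockCorner (2 * H) q + if ε q = 1 then p else p + (H, 0)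

variable {M H : ℕ}

theorem one_le_abs_natCast_sub {a b : ℕ} (hab : a ≠ b) : (1 : ℝ) ≤ |(a : ℝ) - b| := by
  exact_mod_cast Int.one_le_abs (sub_ne_zero.2 (Nat.cast_injective.ne hab : (a : ℤ) ≠ b))

theorem le_abs_mul_add_sub_mul_add {a b : ℕ} (hab : a ≠ b) (c : ℕ) :
    (H : ℝ) ≤ |((a * H + c : ℕ) : ℝ) - ((b * H + c : ℕ) : ℝ)| := by
  push_cast
  rw [add_sub_add_right_eq_sub, ← sub_mul, abs_mul, Nat.abs_cast]
  exact le_mul_of_one_le_left H.cast_nonneg (one_le_abs_natCast_sub hab)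

theorem blockPoint_fst_eq (p : ℕ × ℕ) (ε : Fin M × Fin M → ℤˣ) (q : Fin M × Fin M) :
    (blockPoint H p ε q).1 = (2 * q.1 + if ε q = 1 then 0 else 1) * H + p.1 := by
  by_cases h : ε q = 1 <;> simp [blockPoint, blockCorner, h] <;> ring

theorem blockPoint_snd_eq (p : ℕ × ℕ) (ε : Fin M × Fin M → ℤˣ) (q : Fin M × Fin M) :
    (blockPoint H p ε q).2 = q.2 * (2 * H) + p.2 := by
  by_cases h : ε q = 1 <;> simp [blockPoint, blockCorner, h]

theorem blockPoint_le {p : ℕ × ℕ} (hp : p ∈ range H ×ˢ range (2 * H)) (hm : M * (2 * H) = m)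
    (ε : Fin M × Fin M → ℤˣ) (q : Fin M × Fin M) :
    (blockPoint H p ε q).1 ≤ m ∧ (blockPoint H p ε q).2 ≤ m := by
  rw [mem_product, mem_range, mem_range] at hp
  have block_le (k : Fin M) : (k : ℕ) * (2 * H) + 2 * H ≤ m := by
    rw [← hm, ← add_one_mul]
    exact Nat.mul_le_mul_right _ k.2
  have first := block_le q.1
  have second := block_le q.2
  rw [blockPoint_fst_eq, blockPoint_snd_eq]
  constructor
  · split_ifs <;> nlinarith
  · omega

theorem le_dist_gridPoint_blockPoint {p : ℕ × ℕ} (hp : p ∈ range H ×ˢ range (2 * H))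
    (hm : M * (2 * H) = m) (ε : Fin M × Fin M → ℤˣ) (q q' : Fin M × Fin M) :
    (H : ℝ) ≤ dist (gridPoint (site m (blockPoint H p ε q)))
      (gridPoint (site m (blockPoint H p (-ε) q'))) := by
  obtain ⟨h₁, h₂⟩ := blockPoint_le hp hm ε q
  obtain ⟨h₁', h₂'⟩ := blockPoint_le hp hm (-ε) q'
  rw [gridPoint_site h₁ h₂, gridPoint_site h₁' h₂']
  by_cases hq : (q.2 : ℕ) = q'.2
  · refine le_trans ?_ (abs_sub_le_dist_plane _ _ 0)
    rw [PiLp.toLp_apply, PiLp.toLp_apply, Matrix.cons_val_zero, Matrix.cons_val_zero,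
      blockPoint_fst_eq, blockPoint_fst_eq]
    refine le_abs_mul_add_sub_mul_add (fun heq => ?_) _
    have q_eq : q = q' := Prod.ext (Fin.ext (by split_ifs at heq <;> omega)) (Fin.ext hq)
    subst q_eq
    rcases Int.units_eq_one_or (ε q) with h | h <;> simp [h] at heq
  · refine le_trans ?_ (abs_sub_le_dist_plane _ _ 1)
    rw [PiLp.toLp_apply, PiLp.toLp_apply, Matrix.cons_val_one, Matrix.cons_val_one,
      blockPoint_snd_eq, blockPoint_snd_eq]
    have := le_abs_mul_add_sub_mul_add (H := 2 * H) hq p.2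
    push_cast at this ⊢
    exact le_trans (by linarith [H.cast_nonneg (α := ℝ)]) this

end Grid

section LowerBound

theorem linearization_error_le {m q N s b : ℝ} (hm : 2 ≤ m) (hq₀ : 0 ≤ q) (hq : q ≤ m ^ 2)
    (hN : N ≤ 4 * m ^ 2) (hs : 0 < s) (hb₀ : 0 ≤ b) (hb : b ≤ 4 * m ^ 2 / s) :
    2 * (N * m ^ 14 * b) / m ^ 27 + m ^ 27 * q * (2 * (2 * q * b) / m ^ 41) +
      2 * (q * (q * (2 * b / m ^ 14))) ≤ 1 / 4 / s := by
  have m_pos : 0 < m := by linarith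
  have first : 2 * (N * m ^ 14 * b) / m ^ 27 ≤ 16 / m ^ 8 / s := by
    calc _ ≤ 2 * (4 * m ^ 2 * m ^ 14 * (4 * m ^ 2 / s)) / m ^ 27 := by gcongr
      _ = 16 / m ^ 8 / s * (2 / m) := by field_simp; norm_num
      _ ≤ 16 / m ^ 8 / s := mul_le_of_le_one_right (by positivity) ((div_le_one m_pos).2 hm)
  have second : m ^ 27 * q * (2 * (2 * q * b) / m ^ 41) ≤ 16 / m ^ 8 / s := by
    calc _ ≤ m ^ 27 * m ^ 2 * (2 * (2 * m ^ 2 * (4 * m ^ 2 / s)) / m ^ 41) := by gcongr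
      _ = 16 / m ^ 8 / s := by field_simp; norm_num
  have third : 2 * (q * (q * (2 * b / m ^ 14))) ≤ 16 / m ^ 8 / s := by
    calc _ ≤ 2 * (m ^ 2 * (m ^ 2 * (2 * (4 * m ^ 2 / s) / m ^ 14))) := by gcongr
      _ = 16 / m ^ 8 / s := by field_simp; norm_num
  have small : 16 / m ^ 8 / s ≤ 16 / 2 ^ 8 / s := by gcongr
  calc _ ≤ 3 * (16 / 2 ^ 8 / s) := by linarith
    _ ≤ 1 / 4 / s := by rw [← mul_div_assoc]; gcongr; norm_num

theorem half_le_sub_linearization_error {m q N H s b : ℝ} (hm : 2 ≤ m) (hq₁ : 1 ≤ q)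
    (hq : q ≤ m ^ 2) (hN : N ≤ 4 * m ^ 2) (hH : 1 ≤ H) (hs : 0 < s) (hb₀ : 0 ≤ b)
    (hb : b ≤ 4 * m ^ 2 / s) :
    q * H / (2 * s) ≤ m ^ 27 * q * (H - 2 * (1 / 8)) / s / m ^ 27 - 2 * (N * m ^ 14 * b) / m ^ 27 -
      m ^ 27 * q * (2 * (2 * q * b) / m ^ 41) - 2 * (q * (q * (2 * b / m ^ 14))) := by
  have m_ne : m ≠ 0 := by linarith
  have error := linearization_error_le hm (by linarith) hq hN hs hb₀ hb
  have main : q * H / (2 * s) + 1 / 4 / s ≤ m ^ 27 * q * (H - 2 * (1 / 8)) / s / m ^ 27 :=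
    calc q * H / (2 * s) + 1 / 4 / s = (q * H / 2 + 1 / 4) / s := by field_simp
      _ ≤ q * (H - 2 * (1 / 8)) / s := by gcongr; nlinarith
      _ = _ := by field_simp
  linarith

theorem parking_capacity {m q s : ℕ} (hm : 2 ≤ m) (hq : q ≤ m ^ 2) (hs : m ^ 47 ≤ s) :
    Fintype.card (Site m) * m ^ 41 + Fintype.card (Site m) * m ^ 14 + (m ^ 27 + 1) * q ≤ s := by
  have card_le : Fintype.card (Site m) ≤ m ^ 4 :=
    calc Fintype.card (Site m) ≤ 2 ^ 2 * m ^ 2 := card_site_le hm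
      _ ≤ m ^ 2 * m ^ 2 := by gcongr
      _ = m ^ 4 := by ring
  have succ_le : m ^ 27 + 1 ≤ m ^ 28 := Nat.pow_lt_pow_right hm (by norm_num)
  have le_pow_45 {k : ℕ} (hk : k ≤ 45) : m ^ k ≤ m ^ 45 := Nat.pow_le_pow_right (by omega) hk
  calc _ ≤ m ^ 4 * m ^ 41 + m ^ 4 * m ^ 14 + m ^ 28 * m ^ 2 := by gcongr
    _ = m ^ 45 + m ^ 18 + m ^ 30 := by ring
    _ ≤ 2 ^ 2 * m ^ 45 := by
      linarith [le_pow_45 (k := 18) (by norm_num), le_pow_45 (k := 30) (by norm_num),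
        Nat.zero_le (m ^ 45)]
    _ ≤ m ^ 2 * m ^ 45 := by gcongr
    _ = m ^ 47 := by ring
    _ ≤ s := hs

variable {m M H s : ℕ} {E : Type*} [NormedAddCommGroup E]

theorem sum_smul_blockDifference (φ : ℕ × ℕ → E) (p : ℕ × ℕ) (ε : Fin M × Fin M → ℤˣ) :
    ∑ q, ε q • blockDifference φ M H p q =
      ∑ q, φ (blockPoint H p ε q) - ∑ q, φ (blockPoint H p (-ε) q) := by
  rw [← sum_sub_distrib]
  refine sum_congr rfl fun q _ => ?_
  rcases Int.units_eq_one_or (ε q) with h | h <;> simp [blockDifference, blockPoint, h]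

variable [NormedSpace ℝ E]

/-- The derivative at the configuration `x` of the smoothed parked embedding, as a function on the
grid: its value at `p` is the increment caused by one more point at the site `p`. The box of
smoothing has side `m ^ 14`. -/
noncomputable def gridDerivative (F : Finset Plane → E) (m s : ℕ) (x : Multiset (Site m))
    (p : ℕ × ℕ) : E :=
  smoothDeriv (m ^ 14) (parkedValue F (shiftedGridPoint m) s 0) x (site m p)

variable {F : Finset Plane → E} {D : ℝ} (hF : IsEmdEmbedding F s D) (hm : 2 ≤ m)
  (hs : m ^ 47 ≤ s) (hD : 0 ≤ D)
include hF hm hs hD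

theorem le_boxMean_norm_sum_gridDerivative (hDm : D ≤ m) (hM : M * (2 * H) = m) {p : ℕ × ℕ}
    (hp : p ∈ range H ×ˢ range (2 * H)) (ε : Fin M × Fin M → ℤˣ) :
    (M : ℝ) ^ 2 * H / (2 * s) ≤ boxMean (m ^ 41) fun x =>
      ‖∑ q, ε q • blockDifference (gridDerivative F m s x) M H p q‖ := by
  have hH₁ : 1 ≤ H := Nat.zero_lt_of_lt (mem_range.1 (mem_product.1 hp).1)
  have hM₁ : 1 ≤ M := Nat.pos_of_ne_zero (by rintro rfl; omega)
  have hMm : M ≤ m := hM ▸ Nat.le_mul_of_pos_right M (by omega)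
  have s_pos : (0 : ℝ) < s := by exact_mod_cast (pow_pos (by omega) 47).trans_le hs
  let sites (ε : Fin M × Fin M → ℤˣ) : Multiset (Site m) :=
    univ.val.map fun q => site m (blockPoint H p ε q)
  have card_sites (ε : Fin M × Fin M → ℤˣ) : (sites ε).card = M ^ 2 := by
    rw [Multiset.card_map, card_val, card_univ, Fintype.card_prod, Fintype.card_fin, sq]
  have hb₀ : 0 ≤ D * ((2 * m + 2 * (1 / 8)) / s) := by positivity
  have linearized := sub_le_boxMean_norm_sum_smoothDeriv_sub
    (insertLipschitz_parkedValue hF dist_shiftedGridPoint_le hD dist_gridPoint_zero_le) hb₀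
    (pow_pos (by omega : 0 < m) 14) (pow_pos (by omega : 0 < m) 41) (pow_pos (by omega : 0 < m) 27)
    (card_sites ε) (card_sites (-ε)) (parking_capacity hm (by gcongr) hs)
    fun n hn => le_norm_parkedValue_sub hF dist_shiftedGridPoint_le 0
      (by rw [Multiset.card_nsmul, card_sites]) (by rw [Multiset.card_nsmul, card_sites]) hn
      (H := H) fun v hv w hw => by
        obtain ⟨q, -, rfl⟩ := Multiset.mem_map.1 (Multiset.mem_of_mem_nsmul hv)
        obtain ⟨q', -, rfl⟩ := Multiset.mem_map.1 (Multiset.mem_of_mem_nsmul hw)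
        exact le_dist_gridPoint_blockPoint hp hM ε q q'
  have m_ge : (2 : ℝ) ≤ m := by exact_mod_cast hm
  have hb : D * ((2 * m + 2 * (1 / 8)) / s) ≤ 4 * m ^ 2 / s :=
    calc D * ((2 * m + 2 * (1 / 8)) / s) ≤ m * (4 * m / s) := by gcongr; linarith
      _ = 4 * m ^ 2 / s := by ring
  have numeric := half_le_sub_linearization_error (q := M ^ 2)
    (N := Fintype.card (Site m)) (H := H) m_ge
    (one_le_pow₀ (by exact_mod_cast hM₁)) (by gcongr) (by exact_mod_cast card_site_le hm)
    (by exact_mod_cast hH₁) s_pos hb₀ hb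
  push_cast at linearized
  refine numeric.trans (linearized.trans_eq ?_)
  simp only [sum_smul_blockDifference, sites, Multiset.map_map]
  rfl

theorem le_boxMean_rademacherAverage (hDm : D ≤ m) (hM : M * (2 * H) = m) {p : ℕ × ℕ}
    (hp : p ∈ range H ×ˢ range (2 * H)) :
    (M : ℝ) ^ 2 * H / (2 * s) ≤ boxMean (m ^ 41) fun x =>
      rademacherAverage (blockDifference (gridDerivative F m s x) M H p) := by
  have interchange := boxMean_const_mul (L := m ^ 41)
    (Fintype.card (Fin M × Fin M → ℤˣ) : ℝ)⁻¹ fun x =>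
      ∑ ε : Fin M × Fin M → ℤˣ, ‖∑ q, ε q • blockDifference (gridDerivative F m s x) M H p q‖
  rw [boxMean_sum] at interchange
  simp only [rademacherAverage, Fintype.expect_eq_sum_div_card, div_eq_inv_mul (Finset.sum _ _)]
  rw [interchange, le_inv_mul_iff₀ (by exact_mod_cast Fintype.card_pos), ← nsmul_eq_mul]
  exact card_nsmul_le_sum _ _ _ fun ε _ =>
    le_boxMean_norm_sum_gridDerivative hF hm hs hD hDm hM hp ε

omit hm hs in
theorem gridVariation_gridDerivative_le {x : Multiset (Site m)}
    (hx : Fintype.card (Site m) * m ^ 14 + x.card < s) :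
    gridVariation (gridDerivative F m s x) m ≤ (m : ℝ) ^ 2 * (5 * D / (2 * s)) := by
  have edge {p d : ℕ × ℕ} (h₁ : p.1 + d.1 ≤ m) (h₂ : p.2 + d.2 ≤ m) (hd : d.1 + d.2 = 1) :
      ‖gridDerivative F m s x (p + d) - gridDerivative F m s x p‖ ≤ 5 * D / (4 * s) := by
    rw [gridDerivative, gridDerivative, smoothDeriv, smoothDeriv, sub_sub_sub_cancel_right,
      smooth, smooth, ← boxMean_sub]
    refine norm_boxMean_le (by positivity) fun z hz => ?_
    rw [Multiset.add_cons, Multiset.add_cons]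
    refine (norm_parkedValue_cons_sub_cons_le hF dist_shiftedGridPoint_le hD _ _ _
      (by rw [Multiset.card_add]; omega)).trans ?_
    have one_apart := dist_gridPoint_add_le h₁ h₂
    calc _ ≤ D * ((((d.1 + d.2 : ℕ) : ℝ) + 2 * (1 / 8)) / s) := by gcongr; exact_mod_cast one_apart
      _ = 5 * D / (4 * s) := by rw [hd]; push_cast; ring
  calc gridVariation (gridDerivative F m s x) m
      ≤ ∑ _p ∈ range m ×ˢ range m, (5 * D / (4 * s) + 5 * D / (4 * s)) := by
        refine sum_le_sum fun p hp => ?_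
        rw [mem_product, mem_range, mem_range] at hp
        exact add_le_add (edge hp.1 hp.2.le rfl) (edge hp.1.le hp.2 rfl)
    _ = (m : ℝ) ^ 2 * (5 * D / (2 * s)) := by
        rw [sum_const, card_product, card_range, nsmul_eq_mul]
        push_cast
        ring

end LowerBound

section Scales

variable {K s : ℕ} {E : Type*} [NormedAddCommGroup E] [NormedSpace ℝ E] {F : Finset Plane → E}
  {D : ℝ}

theorem le_boxMean_multiscaleVariation (hF : IsEmdEmbedding F s D) (hK : 0 < K)
    (hs : (2 ^ K) ^ 47 ≤ s) (hD : 0 ≤ D) (hDm : D ≤ (2 ^ K : ℕ)) :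
    K * ((2 ^ K : ℕ) : ℝ) ^ 2 / (4 * s) ≤ boxMean ((2 ^ K) ^ 41) fun x =>
      multiscaleVariation K (gridDerivative F (2 ^ K) s x) := by
  have hm : 2 ≤ 2 ^ K := Nat.le_self_pow hK.ne' 2
  have scale {i : ℕ} (hi : i ∈ range K) :
      ((2 ^ K : ℕ) : ℝ) ^ 2 / (4 * s) ≤ (2 ^ i : ℝ)⁻¹ *
        ∑ p ∈ range (2 ^ i) ×ˢ range (2 * 2 ^ i), boxMean ((2 ^ K) ^ 41) fun x =>
          rademacherAverage
            (blockDifference (gridDerivative F (2 ^ K) s x) (2 ^ (K - 1 - i)) (2 ^ i) p) := by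
    have hM := two_pow_mul_two_mul_two_pow (mem_range.1 hi)
    rw [le_inv_mul_iff₀ (by positivity)]
    refine le_trans (le_of_eq ?_) (card_nsmul_le_sum _ _ _ fun p hp =>
      le_boxMean_rademacherAverage hF hm hs hD hDm hM hp)
    rw [card_product, card_range, card_range, nsmul_eq_mul, ← hM]
    push_cast
    ring
  simp only [multiscaleVariation, boxMean_sum, boxMean_const_mul]
  calc K * ((2 ^ K : ℕ) : ℝ) ^ 2 / (4 * s) = #(range K) • (((2 ^ K : ℕ) : ℝ) ^ 2 / (4 * s)) := by
        rw [card_range, nsmul_eq_mul, mul_div_assoc]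
    _ ≤ _ := card_nsmul_le_sum _ _ _ fun i hi => scale hi

theorem le_mul_of_isEmdEmbedding {Ω : Type*} [MeasurableSpace Ω] {ν : Measure Ω}
    {F : Finset Plane → Lp ℝ 1 ν} (hF : IsEmdEmbedding F s D) (hK : 0 < K)
    (hs : (2 ^ K) ^ 47 ≤ s) (hD : 0 ≤ D) : (K : ℝ) ≤ 70 * D := by
  rcases le_total D (2 ^ K : ℕ) with hDm | hDm
  · have s_pos : (0 : ℝ) < s := by exact_mod_cast (by positivity : 0 < (2 ^ K) ^ 47).trans_le hs
    have hm : 2 ≤ 2 ^ K := Nat.le_self_pow hK.ne' 2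
    have capacity := parking_capacity hm (one_le_pow₀ (one_le_two.trans hm)) hs
    have sobolev : boxMean ((2 ^ K) ^ 41)
        (fun x => multiscaleVariation K (gridDerivative F (2 ^ K) s x)) ≤
          7 * (((2 ^ K : ℕ) : ℝ) ^ 2 * (5 * D / (2 * s))) := by
      rw [← boxMean_const (V := Site (2 ^ K)) (by positivity : 0 < (2 ^ K) ^ 41) (7 * _)]
      refine boxMean_mono fun x hx => (multiscaleVariation_le_gridVariation K _).trans ?_
      gcongr
      exact gridVariation_gridDerivative_le hF hD (by omega)
    have bounds := (le_boxMean_multiscaleVariation hF hK hs hD hDm).trans sobolev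
    have factor_pos : 0 < ((2 ^ K : ℕ) : ℝ) ^ 2 / (4 * s) := by positivity
    refine le_of_mul_le_mul_left ?_ factor_pos
    calc _ = K * ((2 ^ K : ℕ) : ℝ) ^ 2 / (4 * s) := by ring
      _ ≤ _ := bounds
      _ = _ := by ring
  · have : (K : ℝ) ≤ (2 ^ K : ℕ) := by exact_mod_cast Nat.lt_two_pow_self.le
    linarith

end Scales

section FiniteDistortion

section ToL1

variable {ι : Type*} [Fintype ι] [MeasurableSpace ι] [MeasurableSingletonClass ι]

/-- A finite family of reals as an integrable function for the counting measure: this identifies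
`ℓ₁(ι)` with an `L₁` space. -/
noncomputable def toL1 (f : ι → ℝ) : Lp ℝ 1 (Measure.count : Measure ι) :=
  (memLp_one_iff_integrable.2 Integrable.of_finite : MemLp f 1 Measure.count).toLp f

theorem dist_toL1 (f g : ι → ℝ) : dist (toL1 f) (toL1 g) = ∑ i, |f i - g i| := by
  rw [dist_eq_norm, toL1, toL1, ← MemLp.toLp_sub, L1.norm_eq_integral_norm, integral_count]
  exact sum_congr rfl fun i _ =>
    congrArg norm (Measure.ae_count_iff.1 (MemLp.coeFn_toLp _) i)

end ToL1

theorem emdUnif_comm (S T : Finset Plane) : emdUnif S T = emdUnif T S := by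
  simp only [emdUnif, abs_sub_comm]

theorem emdUnif_nonneg {S T : Finset Plane} {s : ℕ} (hS : S.card = s) (hT : T.card = s) :
    0 ≤ emdUnif S T := by
  simpa using abs_sum_sub_sum_div_le_emdUnif hS hT (LipschitzWith.const' (0 : ℝ))

/-- The projection of the plane to the line along the direction `(1, k)`, scaled to be
`1`-Lipschitz. -/
noncomputable def slopeProj (k : ℕ) (z : Plane) : ℝ := (z 0 + k * z 1) / (1 + k)

theorem one_add_mul_slopeProj_sub (k : ℕ) (x y : Plane) :
    (1 + k) * (slopeProj k x - slopeProj k y) = (x 0 - y 0) + k * (x 1 - y 1) := by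
  rw [slopeProj, slopeProj]
  field_simp
  ring

theorem lipschitzWith_slopeProj (k : ℕ) : LipschitzWith 1 (slopeProj k) := by
  refine LipschitzWith.of_dist_le_mul fun x y => ?_
  rw [NNReal.coe_one, one_mul, Real.dist_eq]
  have hk : (0 : ℝ) < 1 + k := by positivity
  refine le_of_mul_le_mul_left ?_ hk
  calc (1 + k) * |slopeProj k x - slopeProj k y| = |(x 0 - y 0) + k * (x 1 - y 1)| := by
        rw [← one_add_mul_slopeProj_sub, abs_mul, abs_of_pos hk]
    _ ≤ |x 0 - y 0| + k * |x 1 - y 1| := by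
        simpa [abs_mul] using abs_add_le (x 0 - y 0) (k * (x 1 - y 1))
    _ ≤ dist x y + k * dist x y := by
        gcongr <;> exact abs_sub_le_dist_plane x y _
    _ = (1 + k) * dist x y := by ring

theorem dist_le_mul_abs_slopeProj_add {n k l : ℕ} (hkl : k ≠ l) (hk : k ≤ n) (hl : l ≤ n)
    (x y : Plane) :
    dist x y ≤ 2 * (1 + n) ^ 2 *
      (|slopeProj k x - slopeProj k y| + |slopeProj l x - slopeProj l y|) := by
  have hk_le : (1 + k : ℝ) ≤ 1 + n := by gcongr
  have hl_le : (1 + l : ℝ) ≤ 1 + n := by gcongr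
  have eq_k := one_add_mul_slopeProj_sub k x y
  have eq_l := one_add_mul_slopeProj_sub l x y
  generalize slopeProj k x - slopeProj k y = σ, slopeProj l x - slopeProj l y = τ at eq_k eq_l ⊢
  have second : |x 1 - y 1| ≤ (1 + n) * (|σ| + |τ|) :=
    calc |x 1 - y 1| ≤ |(k : ℝ) - l| * |x 1 - y 1| :=
          le_mul_of_one_le_left (abs_nonneg _) (one_le_abs_natCast_sub hkl)
      _ = |(1 + k) * σ - (1 + l) * τ| := by rw [← abs_mul, eq_k, eq_l]; congr 1; ring
      _ ≤ (1 + k) * |σ| + (1 + l) * |τ| := (abs_sub _ _).trans_eq (by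
          rw [abs_mul, abs_mul, abs_of_nonneg (by positivity : (0 : ℝ) ≤ 1 + k),
            abs_of_nonneg (by positivity : (0 : ℝ) ≤ 1 + l)])
      _ ≤ (1 + n) * |σ| + (1 + n) * |τ| := by gcongr
      _ = _ := by ring
  have first : |x 0 - y 0| ≤ (1 + n) * |σ| + n * |x 1 - y 1| :=
    calc |x 0 - y 0| = |(1 + k) * σ - k * (x 1 - y 1)| := by rw [eq_k]; congr 1; ring
      _ ≤ (1 + k) * |σ| + k * |x 1 - y 1| := (abs_sub _ _).trans_eq (by
          rw [abs_mul, abs_mul, Nat.abs_cast, abs_of_nonneg (by positivity : (0 : ℝ) ≤ 1 + k)])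
      _ ≤ _ := by gcongr
  calc dist x y ≤ |x 0 - y 0| + |x 1 - y 1| := dist_plane_le x y
    _ ≤ (1 + n) * |σ| + (1 + n) * |x 1 - y 1| := by linarith
    _ ≤ (1 + n) * |σ| + (1 + n) * ((1 + n) * (|σ| + |τ|)) := by gcongr
    _ ≤ (1 + n) ^ 2 * (|σ| + |τ|) + (1 + n) * ((1 + n) * (|σ| + |τ|)) := by
        gcongr
        · exact le_self_pow₀ (by simp) two_ne_zero
        · exact le_add_of_nonneg_right (abs_nonneg τ)
    _ = _ := by ring

variable {s : ℕ}

/-- The points of an `s`-point set, listed in increasing order of `slopeProj k`. -/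
noncomputable def sortedPoint (k : ℕ) (S : {S : Finset Plane // S.card = s}) : Fin s ≃ S.1 :=
  (Tuple.sort fun i => slopeProj k ((S.1.equivFinOfCardEq S.2).symm i)).trans
    (S.1.equivFinOfCardEq S.2).symm

variable (S T : {S : Finset Plane // S.card = s})

theorem monotone_slopeProj_sortedPoint (k : ℕ) :
    Monotone fun i => slopeProj k (sortedPoint k S i) :=
  Tuple.monotone_sort fun i => slopeProj k ((S.1.equivFinOfCardEq S.2).symm i)

theorem sum_sortedPoint (k : ℕ) (φ : Plane → ℝ) : ∑ i, φ (sortedPoint k S i) = ∑ z ∈ S.1, φ z := by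
  rw [(sortedPoint k S).sum_comp fun z => φ z, sum_coe_sort]

theorem emdUnif_le_sum_dist_sortedPoint (k : ℕ) :
    emdUnif S.1 T.1 ≤ (∑ i, dist (sortedPoint k S i : Plane) (sortedPoint k T i)) / s := by
  refine emdUnif_le S.2 T.2 fun φ hφ => ?_
  rw [← sum_sortedPoint S k, ← sum_sortedPoint T k, ← sum_sub_distrib]
  refine (abs_sum_le_sum_abs _ _).trans (sum_le_sum fun i _ => ?_)
  simpa [Real.dist_eq] using hφ.dist_le_mul (sortedPoint k S i : Plane) (sortedPoint k T i)

theorem exists_forall_dist_le_mul_abs_slopeProj : ∃ k : Fin (s ^ 2 + 1), ∀ (x : S.1) (y : T.1),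
    dist (x : Plane) y ≤ 4 * (1 + (s : ℝ) ^ 2) ^ 2 * |slopeProj k x - slopeProj k y| := by
  by_contra! contracted
  choose x y hxy using contracted
  obtain ⟨k, l, hkl, heq⟩ := Fintype.exists_ne_map_eq_of_card_lt (fun k => (x k, y k))
    (by simp [S.2, T.2, sq])
  obtain ⟨x_eq, y_eq⟩ := Prod.mk.inj heq
  have hk := hxy k
  have hl := hxy l
  rw [← x_eq, ← y_eq] at hl
  have := dist_le_mul_abs_slopeProj_add (Fin.val_injective.ne hkl) (Nat.le_of_lt_succ k.2)
    (Nat.le_of_lt_succ l.2) (x k : Plane) (y k)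
  push_cast at this
  linarith

theorem slopeProj_sortedPoint_sub_le (k : ℕ) (i : Fin s) :
    slopeProj k (sortedPoint k T i) - slopeProj k (sortedPoint k S i) ≤ s * emdUnif S.1 T.1 := by
  set a := slopeProj k (sortedPoint k S i)
  set b := slopeProj k (sortedPoint k T i)
  have emd_nonneg := emdUnif_nonneg S.2 T.2
  rcases le_total b a with hba | hab
  · exact (sub_nonpos.2 hba).trans (by positivity)
  -- Clipping `slopeProj k` at `a` and `b` leaves only the surplus of `T` over `S`, by monotonicity.
  let φ (z : Plane) : ℝ := Set.projIcc a b hab (slopeProj k z)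
  have hφ : LipschitzWith 1 φ := by
    have clip := (LipschitzWith.subtype_val (Set.Icc a b)).comp (LipschitzWith.projIcc hab)
    rw [one_mul] at clip
    exact (clip.comp (lipschitzWith_slopeProj k)).weaken (mul_one 1).le
  have term_nonneg (j : Fin s) : φ (sortedPoint k S j) ≤ φ (sortedPoint k T j) := by
    rcases le_total j i with hj | hj
    · have : φ (sortedPoint k S j) = a :=
        congrArg Subtype.val (Set.projIcc_of_le_left hab (monotone_slopeProj_sortedPoint S k hj))
      exact this.trans_le (Set.projIcc a b hab _).2.1
    · have : φ (sortedPoint k T j) = b :=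
        congrArg Subtype.val (Set.projIcc_of_right_le hab (monotone_slopeProj_sortedPoint T k hj))
      exact (Set.projIcc a b hab _).2.2.trans_eq this.symm
  calc b - a = φ (sortedPoint k T i) - φ (sortedPoint k S i) := by
        simp only [φ]
        rw [Set.projIcc_of_le_left hab le_rfl, Set.projIcc_of_right_le hab le_rfl]
    _ ≤ ∑ j, (φ (sortedPoint k T j) - φ (sortedPoint k S j)) :=
        single_le_sum (f := fun j => φ (sortedPoint k T j) - φ (sortedPoint k S j))
          (fun j _ => sub_nonneg.2 (term_nonneg j)) (mem_univ i)
    _ = ∑ z ∈ T.1, φ z - ∑ z ∈ S.1, φ z := by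
        rw [sum_sub_distrib, sum_sortedPoint, sum_sortedPoint]
    _ ≤ s * emdUnif S.1 T.1 := by
        rw [emdUnif_comm, ← div_le_iff₀' (by exact_mod_cast i.pos)]
        refine le_trans ?_ (abs_sum_sub_sum_div_le_emdUnif T.2 S.2 hφ)
        gcongr
        exact le_abs_self _

/-- The sorted values of the projections to `s² + 1` slopes, weighted so as not to contract. -/
noncomputable def sortedSlices (S : {S : Finset Plane // S.card = s})
    (p : Fin (s ^ 2 + 1) × Fin s) : ℝ :=
  4 * (1 + (s : ℝ) ^ 2) ^ 2 / s * slopeProj p.1 (sortedPoint p.1 S p.2)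

theorem abs_sortedSlices_sub (p : Fin (s ^ 2 + 1) × Fin s) :
    |sortedSlices S p - sortedSlices T p| = 4 * (1 + (s : ℝ) ^ 2) ^ 2 / s *
      |slopeProj p.1 (sortedPoint p.1 S p.2) - slopeProj p.1 (sortedPoint p.1 T p.2)| := by
  rw [sortedSlices, sortedSlices, ← mul_sub, abs_mul, abs_of_nonneg (by positivity)]

theorem emdUnif_le_sum_abs_sortedSlices_sub :
    emdUnif S.1 T.1 ≤ ∑ p, |sortedSlices S p - sortedSlices T p| := by
  obtain ⟨k, hk⟩ := exists_forall_dist_le_mul_abs_slopeProj S T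
  calc emdUnif S.1 T.1
      ≤ (∑ i, dist (sortedPoint k S i : Plane) (sortedPoint k T i)) / s :=
        emdUnif_le_sum_dist_sortedPoint S T k
    _ ≤ ∑ i, |sortedSlices S (k, i) - sortedSlices T (k, i)| := by
        rw [sum_div]
        refine sum_le_sum fun i _ => ?_
        rw [abs_sortedSlices_sub, div_mul_eq_mul_div]
        gcongr
        exact hk _ _
    _ ≤ ∑ p, |sortedSlices S p - sortedSlices T p| := by
        rw [Fintype.sum_prod_type]
        exact single_le_sum (f := fun k => ∑ i, |sortedSlices S (k, i) - sortedSlices T (k, i)|)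
          (fun k _ => by positivity) (mem_univ k)

theorem sum_abs_sortedSlices_sub_le :
    ∑ p, |sortedSlices S p - sortedSlices T p| ≤
      Fintype.card (Fin (s ^ 2 + 1) × Fin s) * (4 * (1 + (s : ℝ) ^ 2) ^ 2) * emdUnif S.1 T.1 := by
  rw [mul_assoc, ← nsmul_eq_mul]
  refine sum_le_card_nsmul _ _ _ fun p _ => ?_
  have s_pos : (0 : ℝ) < s := by exact_mod_cast p.2.pos
  rw [abs_sortedSlices_sub]
  calc _ ≤ 4 * (1 + (s : ℝ) ^ 2) ^ 2 / s * (s * emdUnif S.1 T.1) := by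
        gcongr
        rw [abs_sub_le_iff]
        exact ⟨emdUnif_comm S.1 T.1 ▸ slopeProj_sortedPoint_sub_le T S _ _,
          slopeProj_sortedPoint_sub_le S T _ _⟩
    _ = _ := by field_simp

theorem exists_L1_embedding (s : ℕ) : ∃ D : ℝ, 1 ≤ D ∧ ∃ (Ω : Type) (_ : MeasurableSpace Ω)
    (ν : Measure Ω) (f : {S : Finset Plane // S.card = s} → Lp ℝ 1 ν), ∀ S T,
      emdUnif S.1 T.1 ≤ dist (f S) (f T) ∧ dist (f S) (f T) ≤ D * emdUnif S.1 T.1 := by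
  refine ⟨max 1 (Fintype.card (Fin (s ^ 2 + 1) × Fin s) * (4 * (1 + (s : ℝ) ^ 2) ^ 2)),
    le_max_left _ _, _, _, _, fun S => toL1 (sortedSlices S), fun S T => ?_⟩
  rw [dist_toL1]
  refine ⟨emdUnif_le_sum_abs_sortedSlices_sub S T, (sum_abs_sortedSlices_sub_le S T).trans ?_⟩
  exact mul_le_mul_of_nonneg_right (le_max_right _ _) (emdUnif_nonneg S.2 T.2)

end FiniteDistortion

section Logarithm

theorem two_pow_log_div_pow_le {n s : ℕ} (hs : s ≠ 0) : (2 ^ (Nat.log 2 s / n)) ^ n ≤ s := by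
  rw [← pow_mul]
  exact (Nat.pow_le_pow_right two_pos (Nat.div_mul_le_self _ _)).trans (Nat.pow_log_le_self 2 hs)

theorem log_le_mul_log_div {n s : ℕ} (hn : 0 < n) (hs : 2 ^ n ≤ s) :
    Real.log s ≤ 2 * n * (Nat.log 2 s / n : ℕ) := by
  have s_pos : 0 < s := (pow_pos two_pos n).trans_le hs
  have n_le : n ≤ Nat.log 2 s := Nat.le_log_of_pow_le one_lt_two hs
  have succ_le : Nat.log 2 s + 1 ≤ 2 * n * (Nat.log 2 s / n) := by
    have one_le : 1 ≤ Nat.log 2 s / n := (Nat.one_le_div_iff hn).2 n_le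
    have := Nat.div_add_mod (Nat.log 2 s) n
    have := Nat.mod_lt (Nat.log 2 s) hn
    nlinarith
  calc Real.log s ≤ Real.log (2 ^ (Nat.log 2 s + 1)) :=
        Real.log_le_log (by exact_mod_cast s_pos)
          (by exact_mod_cast (Nat.lt_pow_succ_log_self one_lt_two s).le)
    _ = (Nat.log 2 s + 1 : ℕ) * Real.log 2 := Real.log_pow _ _
    _ ≤ (Nat.log 2 s + 1 : ℕ) * 1 := by gcongr; linarith [Real.log_two_lt_d9]
    _ ≤ 2 * n * (Nat.log 2 s / n : ℕ) := by rw [mul_one]; exact_mod_cast succ_le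

end Logarithm

theorem isEmdEmbedding_extend {s : ℕ} {E : Type*} [NormedAddCommGroup E] {D : ℝ}
    {f : {S : Finset Plane // S.card = s} → E}
    (hf : ∀ S T, emdUnif S.1 T.1 ≤ dist (f S) (f T) ∧ dist (f S) (f T) ≤ D * emdUnif S.1 T.1) :
    IsEmdEmbedding (Function.extend Subtype.val f 0) s D := fun S T hS hT => by
  simpa [Subtype.val_injective.extend_apply f 0 ⟨S, hS⟩,
    Subtype.val_injective.extend_apply f 0 ⟨T, hT⟩] using hf ⟨S, hS⟩ ⟨T, hT⟩

/-- There exist constants `c > 0` and `s₀` such that for every integer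
`s ≥ s₀`, `c₁(M₂^s) ≥ c·log s`, where `M₂^s` is the set of uniform probability
distributions on `s`-point subsets of the Euclidean plane with the earth mover's
distance. -/
theorem c1_uniform_distributions_lower :
    ∃ c : ℝ, 0 < c ∧ ∃ s₀ : ℕ, ∀ s : ℕ, s₀ ≤ s →
      c1OfDist
          (fun S T : {S : Finset (EuclideanSpace ℝ (Fin 2)) // S.card = s} =>
            emdUnif S.1 T.1) ≥
        c * Real.log s := by
  refine ⟨(70 * (2 * 47))⁻¹, by norm_num, 2 ^ 47, fun s hs => ?_⟩
  -- Some embedding of finite distortion must be exhibited because `sInf ∅ = 0`.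
  refine le_csInf (exists_L1_embedding s) ?_
  rintro D ⟨hD, Ω, _, ν, f, hf⟩
  let K := Nat.log 2 s / 47
  have hK : 0 < K := Nat.div_pos (Nat.le_log_of_pow_le one_lt_two hs) (by norm_num)
  have hKs : (2 ^ K) ^ 47 ≤ s := two_pow_log_div_pow_le (by omega)
  have log_le : Real.log s ≤ 2 * 47 * K := log_le_mul_log_div (by norm_num) hs
  have K_le : (K : ℝ) ≤ 70 * D :=
    le_mul_of_isEmdEmbedding (isEmdEmbedding_extend hf) hK hKs (by linarith)
  rw [inv_mul_le_iff₀ (by norm_num)]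
  linarith
end

section
/- Let G be an st-graph whose thickness function th_G is witnessed by a finite index set I and directed edge paths {γ_i}_{i∈I} from s_G to t_G. Then: (1) Σ_{e∈E(G)} th_G(e)·d_G(e) = 1; and (2) for every A ⊆ V(G) containing exactly one of s_G and t_G, Σ_{e∈∂_G A} th_G(e) ≥ 1, where ∂_G A is the set of edges with exactly one endpoint in A. -/
open Finset

/-- A finite weighted directed graph with distinguished source and sink vertices, edge
lengths, and an edge thickness function. This is the underlying data of an `st`-graph. -/
structure WGraph : Type 1 where
  /-- vertex set -/
  V : Type
  /-- edge index set -/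
  ι : Type
  finV : Fintype V
  decV : DecidableEq V
  finι : Fintype ι
  decι : DecidableEq ι
  /-- initial vertex of an edge -/
  src : ι → V
  /-- terminal vertex of an edge -/
  dst : ι → V
  /-- length of an edge -/
  len : ι → ℝ
  /-- thickness of an edge -/
  th : ι → ℝ
  /-- source vertex -/
  s : V
  /-- sink vertex -/
  t : V

attribute [instance] WGraph.finV WGraph.decV WGraph.finι WGraph.decι

namespace WGraph

/-- Initial vertex of a step (an edge traversed forwards or backwards). -/
def stepSrc (G : WGraph) (p : G.ι × Bool) : G.V := if p.2 then G.src p.1 else G.dst p.1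

/-- Terminal vertex of a step. -/
def stepDst (G : WGraph) (p : G.ι × Bool) : G.V := if p.2 then G.dst p.1 else G.src p.1

/-- `G.IsWalk x y l` : the list of steps `l` forms a walk from `x` to `y` in the underlying
undirected graph of `G`. -/
def IsWalk (G : WGraph) : G.V → G.V → List (G.ι × Bool) → Prop
  | x, y, [] => x = y
  | x, y, p :: l => G.stepSrc p = x ∧ G.IsWalk (G.stepDst p) y l

/-- `G.IsDiWalk x y l` : the list of edges `l` forms a directed walk from `x` to `y`. -/
def IsDiWalk (G : WGraph) : G.V → G.V → List G.ι → Prop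
  | x, y, [] => x = y
  | x, y, e :: l => G.src e = x ∧ G.IsDiWalk (G.dst e) y l

/-- The length of a directed walk. -/
def diLen (G : WGraph) (l : List G.ι) : ℝ := (l.map G.len).sum

/-- The weighted shortest-path metric of `G`. -/
noncomputable def gdist (G : WGraph) (x y : G.V) : ℝ :=
  sInf { c : ℝ | ∃ l : List (G.ι × Bool), G.IsWalk x y l ∧
    c = (l.map fun p => G.len p.1).sum }

end WGraph

/-- `G` is an `st`-graph: it has positive edge lengths and thicknesses, it is connected,
its weighted shortest-path metric satisfies `d(s,t) = 1`, every directed path is a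
geodesic, and the thickness function is witnessed by a finite nonempty family of directed
edge paths from `s` to `t` via `th(e) = |{i : e ∈ γ_i}| / |I|`. -/
structure IsSTGraph (G : WGraph) : Prop where
  s_ne_t : G.s ≠ G.t
  len_pos : ∀ e, 0 < G.len e
  th_pos : ∀ e, 0 < G.th e
  conn : ∀ x y : G.V, ∃ l, G.IsWalk x y l
  dist_st : G.gdist G.s G.t = 1
  dir_geodesic : ∀ (x y : G.V) (l : List G.ι), G.IsDiWalk x y l → G.gdist x y = G.diLen l
  th_witness : ∃ (m : ℕ) (γ : Fin (m + 1) → List G.ι),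
    (∀ i, G.IsDiWalk G.s G.t (γ i)) ∧
    ∀ e : G.ι, G.th e = ((Finset.univ.filter fun i => e ∈ γ i).card : ℝ) / (m + 1)

/-- `G` is an `st`-path: it consists of a single directed path from `s` to `t`, and all
edges have thickness `1`. -/
def IsSTPath (G : WGraph) : Prop :=
  ∃ (k : ℕ) (E : Fin k ≃ G.ι) (v : Fin (k + 1) → G.V),
    Function.Bijective v ∧ v 0 = G.s ∧ v (Fin.last k) = G.t ∧
    (∀ i : Fin k, G.src (E i) = v i.castSucc ∧ G.dst (E i) = v i.succ) ∧
    (∀ e, G.th e = 1)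

namespace WGraph

/-- The map sending a vertex of `H` to the corresponding vertex of `G ⊘ H` obtained by
replacing the edge `e` of `G` with a copy of `H` (where `s_H` is identified with the
initial vertex of `e` and `t_H` with the terminal vertex of `e`). -/
def slashEmbed (G H : WGraph) (e : G.ι) (v : H.V) :
    G.V ⊕ (G.ι × {v : H.V // v ≠ H.s ∧ v ≠ H.t}) :=
  if hs : v = H.s then Sum.inl (G.src e)
  else if ht : v = H.t then Sum.inl (G.dst e)
  else Sum.inr (e, ⟨v, hs, ht⟩)

/-- The slash product `G ⊘ H`: every edge of `G` is replaced by a copy of `H`. New edge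
lengths and thicknesses are the products of the corresponding ones of `G` and `H`. -/
def slash (G H : WGraph) : WGraph where
  V := G.V ⊕ (G.ι × {v : H.V // v ≠ H.s ∧ v ≠ H.t})
  ι := G.ι × H.ι
  finV := inferInstance
  decV := inferInstance
  finι := inferInstance
  decι := inferInstance
  src := fun p => slashEmbed G H p.1 (H.src p.2)
  dst := fun p => slashEmbed G H p.1 (H.dst p.2)
  len := fun p => G.len p.1 * H.len p.2
  th := fun p => G.th p.1 * H.th p.2
  s := Sum.inl G.s
  t := Sum.inl G.t

/-- The trivial `st`-path: a single directed edge from `s` to `t` of length 1 and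
thickness 1. -/
def edgeGraph : WGraph where
  V := Bool
  ι := Unit
  finV := inferInstance
  decV := inferInstance
  finι := inferInstance
  decι := inferInstance
  src := fun _ => false
  dst := fun _ => true
  len := fun _ => 1
  th := fun _ => 1
  s := false
  t := true

/-- Slash powers: `G^{⊘0}` is a single directed edge from `s` to `t` of length 1 and
thickness 1, and `G^{⊘(n+1)} = G^{⊘n} ⊘ G`. -/
def slashPow (G : WGraph) : ℕ → WGraph
  | 0 => edgeGraph
  | n + 1 => (G.slashPow n).slash G

end WGraph

/-!
The thickness of an edge is the probability that a uniformly random path `γ i` uses it, so a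
thickness-weighted sum over the edges is the expectation of the corresponding sum over the edges
of `γ i`. A directed geodesic cannot repeat an edge of positive length, hence its edge lengths add
up to `d(s, t)`; and a walk between vertices separated by `A` uses at least one edge of `∂A`.
-/

open scoped BigOperators

namespace WGraph

variable {G : WGraph}

section DirectedWalk

variable {x y : G.V} {e : G.ι} {l : List G.ι}

theorem diLen_nil : G.diLen [] = 0 := rfl

theorem diLen_cons (e : G.ι) (l : List G.ι) : G.diLen (e :: l) = G.len e + G.diLen l :=
  List.sum_cons

theorem diLen_nonneg (hlen : ∀ e, 0 ≤ G.len e) (l : List G.ι) : 0 ≤ G.diLen l :=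
  List.sum_nonneg (List.forall_mem_map.2 fun e _ ↦ hlen e)

theorem isDiWalk_singleton (e : G.ι) : G.IsDiWalk (G.src e) (G.dst e) [e] := ⟨rfl, rfl⟩

theorem isDiWalk_append {a b : List G.ι} :
    G.IsDiWalk x y (a ++ b) ↔ ∃ z, G.IsDiWalk x z a ∧ G.IsDiWalk z y b := by
  induction a generalizing x with
  | nil => simp [IsDiWalk]
  | cons e a ih => simp [IsDiWalk, ih, and_assoc]

theorem IsDiWalk.len_eq_zero_of_mem (hlen : ∀ e, 0 ≤ G.len e)
    (hclosed : ∀ x l, G.IsDiWalk x x l → G.diLen l = 0)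
    (h : G.IsDiWalk x y (e :: l)) (he : e ∈ l) : G.len e = 0 := by
  obtain ⟨a, b, rfl⟩ := List.append_of_mem he
  obtain ⟨_, ha, rfl, -⟩ := isDiWalk_append.1 h.2
  have hcycle : G.len e + G.diLen a = 0 := by
    rw [← diLen_cons, hclosed (G.src e) (e :: a) ⟨rfl, ha⟩]
  exact ((add_eq_zero_iff_of_nonneg (hlen e) (diLen_nonneg hlen a)).1 hcycle).1

theorem IsDiWalk.sum_toFinset_len_eq_diLen (hlen : ∀ e, 0 ≤ G.len e)
    (hclosed : ∀ x l, G.IsDiWalk x x l → G.diLen l = 0) (h : G.IsDiWalk x y l) :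
    ∑ e ∈ l.toFinset, G.len e = G.diLen l := by
  induction l generalizing x with
  | nil => rfl
  | cons e l ih =>
    rw [diLen_cons, ← ih h.2, List.toFinset_cons]
    by_cases he : e ∈ l
    · rw [insert_eq_of_mem (List.mem_toFinset.2 he), h.len_eq_zero_of_mem hlen hclosed he, zero_add]
    · exact sum_insert (mt List.mem_toFinset.1 he)

end DirectedWalk

section Geodesic

/-- Every directed walk of `G` is a geodesic for the shortest-path metric. -/
def DirectedGeodesic (G : WGraph) : Prop :=
  ∀ x y l, G.IsDiWalk x y l → G.gdist x y = G.diLen l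

theorem DirectedGeodesic.gdist_src_dst (hgeo : G.DirectedGeodesic) (e : G.ι) :
    G.gdist (G.src e) (G.dst e) = G.len e := by
  rw [hgeo _ _ _ (isDiWalk_singleton e), diLen_cons, diLen_nil, add_zero]

theorem DirectedGeodesic.diLen_eq_zero (hgeo : G.DirectedGeodesic) (x : G.V) (l : List G.ι)
    (h : G.IsDiWalk x x l) : G.diLen l = 0 := by
  rw [← hgeo x x l h, hgeo x x [] rfl, diLen_nil]

theorem DirectedGeodesic.sum_toFinset_len_eq_gdist (hgeo : G.DirectedGeodesic)
    (hlen : ∀ e, 0 ≤ G.len e) {x y : G.V} {l : List G.ι} (h : G.IsDiWalk x y l) :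
    ∑ e ∈ l.toFinset, G.len e = G.gdist x y := by
  rw [h.sum_toFinset_len_eq_diLen hlen hgeo.diLen_eq_zero, hgeo x y l h]

end Geodesic

section EdgeBoundary

/-- The vertex set `A` separates `x` from `y`: it contains exactly one of them. -/
abbrev Separates (A : Finset G.V) (x y : G.V) : Prop := (x ∈ A ∧ y ∉ A) ∨ (x ∉ A ∧ y ∈ A)

/-- The edge boundary `∂A`: the edges with exactly one endpoint in `A`. -/
def edgeBoundary (A : Finset G.V) : Finset G.ι := {e | Separates A (G.src e) (G.dst e)}

theorem mem_edgeBoundary {A : Finset G.V} {e : G.ι} :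
    e ∈ edgeBoundary A ↔ Separates A (G.src e) (G.dst e) := by
  simp [edgeBoundary]

theorem Separates.of_not_separates {A : Finset G.V} {x y z : G.V} (hxz : Separates A x z)
    (hxy : ¬ Separates A x y) : Separates A y z := by
  tauto

theorem IsDiWalk.exists_mem_edgeBoundary {A : Finset G.V} {x y : G.V} {l : List G.ι}
    (h : G.IsDiWalk x y l) (hA : Separates A x y) : ∃ e ∈ l, e ∈ edgeBoundary A := by
  induction l generalizing x with
  | nil =>
    obtain rfl : x = y := h
    tauto
  | cons e l ih =>
    obtain ⟨rfl, hl⟩ := h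
    by_cases he : e ∈ edgeBoundary A
    · exact ⟨e, List.mem_cons_self, he⟩
    · obtain ⟨f, hfl, hf⟩ := ih hl (hA.of_not_separates (mt mem_edgeBoundary.2 he))
      exact ⟨f, List.mem_cons_of_mem e hfl, hf⟩

end EdgeBoundary

section Thickness

variable {I : Type*} [Fintype I] {γ : I → List G.ι}

/-- The thickness function of `G` is witnessed by the finite family `γ` of directed walks from
`s` to `t`: the thickness of an edge is the proportion of the members of `γ` that use it. -/
structure IsThicknessWitness (G : WGraph) (γ : I → List G.ι) : Prop where
  isDiWalk : ∀ i, G.IsDiWalk G.s G.t (γ i)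
  th_eq : ∀ e, G.th e = (#{i | e ∈ γ i} : ℝ) / Fintype.card I

namespace IsThicknessWitness

theorem th_eq_expect (hγ : G.IsThicknessWitness γ) (e : G.ι) :
    G.th e = 𝔼 i, if e ∈ γ i then 1 else 0 := by
  rw [hγ.th_eq, Fintype.expect_eq_sum_div_card, sum_boole]

theorem sum_th_mul (hγ : G.IsThicknessWitness γ) (f : G.ι → ℝ) :
    ∑ e, G.th e * f e = 𝔼 i, ∑ e ∈ (γ i).toFinset, f e :=
  calc ∑ e, G.th e * f e
      = ∑ e, 𝔼 i, (if e ∈ γ i then 1 else 0) * f e := by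
        simp only [hγ.th_eq_expect, expect_mul]
    _ = 𝔼 i, ∑ e, (if e ∈ γ i then 1 else 0) * f e := (expect_sum_comm _ _ _).symm
    _ = 𝔼 i, ∑ e ∈ (γ i).toFinset, f e := by
        simp only [← List.mem_toFinset, boole_mul, sum_ite_mem, univ_inter]

theorem sum_th_eq_expect_card (hγ : G.IsThicknessWitness γ) (B : Finset G.ι) :
    ∑ e ∈ B, G.th e = 𝔼 i, (#((γ i).toFinset ∩ B) : ℝ) := by
  simpa using hγ.sum_th_mul fun e ↦ if e ∈ B then 1 else 0

variable [Nonempty I]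

theorem sum_th_mul_gdist (hγ : G.IsThicknessWitness γ) (hgeo : G.DirectedGeodesic)
    (hlen : ∀ e, 0 ≤ G.len e) :
    ∑ e, G.th e * G.gdist (G.src e) (G.dst e) = G.gdist G.s G.t := by
  simp only [hgeo.gdist_src_dst, hγ.sum_th_mul, hgeo.sum_toFinset_len_eq_gdist hlen (hγ.isDiWalk _),
    Fintype.expect_const]

theorem one_le_sum_th_edgeBoundary (hγ : G.IsThicknessWitness γ) {A : Finset G.V}
    (hA : Separates A G.s G.t) : 1 ≤ ∑ e ∈ edgeBoundary A, G.th e := by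
  rw [hγ.sum_th_eq_expect_card]
  refine le_expect univ_nonempty fun i _ ↦ ?_
  obtain ⟨e, heγ, heA⟩ := (hγ.isDiWalk i).exists_mem_edgeBoundary hA
  exact_mod_cast card_pos.2 ⟨e, mem_inter.2 ⟨List.mem_toFinset.2 heγ, heA⟩⟩

end IsThicknessWitness

end Thickness

end WGraph

theorem IsSTGraph.exists_isThicknessWitness {G : WGraph} (hG : IsSTGraph G) :
    ∃ (m : ℕ) (γ : Fin (m + 1) → List G.ι), G.IsThicknessWitness γ := by
  obtain ⟨m, γ, hwalk, hth⟩ := hG.th_witness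
  exact ⟨m, γ, hwalk, by simpa using hth⟩

open WGraph in
theorem stGraph_thickness_facts_general {G : WGraph} {I : Type*} [Fintype I] [Nonempty I]
    {γ : I → List G.ι} (hγ : G.IsThicknessWitness γ) (hgeo : G.DirectedGeodesic)
    (hlen : ∀ e, 0 ≤ G.len e) :
    ∑ e, G.th e * G.gdist (G.src e) (G.dst e) = G.gdist G.s G.t ∧
      ∀ A : Finset G.V, Separates A G.s G.t → 1 ≤ ∑ e ∈ edgeBoundary A, G.th e :=
  ⟨hγ.sum_th_mul_gdist hgeo hlen, fun _ hA ↦ hγ.one_le_sum_th_edgeBoundary hA⟩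

/-- Let `G` be an `st`-graph (whose thickness function is witnessed by a
finite family of directed edge paths from `s_G` to `t_G`). Then:
(1) `Σ_{e∈E(G)} th_G(e)·d_G(e) = 1`; and
(2) for every `A ⊆ V(G)` containing exactly one of `s_G`, `t_G`,
`Σ_{e∈∂_G A} th_G(e) ≥ 1`, where `∂_G A` is the set of edges with exactly one endpoint
in `A`. -/
theorem stGraph_thickness_facts (G : WGraph) (hG : IsSTGraph G) :
    (∑ e, G.th e * G.gdist (G.src e) (G.dst e) = 1) ∧
    ∀ A : Finset G.V, ((G.s ∈ A ∧ G.t ∉ A) ∨ (G.s ∉ A ∧ G.t ∈ A)) →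
      1 ≤ ∑ e ∈ Finset.univ.filter
            (fun e => (G.src e ∈ A ∧ G.dst e ∉ A) ∨ (G.src e ∉ A ∧ G.dst e ∈ A)),
          G.th e := by
  obtain ⟨m, γ, hγ⟩ := hG.exists_isThicknessWitness
  exact hG.dist_st ▸ stGraph_thickness_facts_general hγ hG.dir_geodesic fun e ↦ (hG.len_pos e).le
end
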